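/- arXiv:1604.08841 — 4 statements merged into one kernel-verified Lean document; each statement's English description precedes it below -/
import Mathlib

section
/- Let δ, ρ > 0 and 0 < η < 1 satisfy ρη > δ. Let A ⊆ ℝ² and let S ⊆ ℝ² be a vertical segment of length at most 2δ. Assume that for every x ∈ A ∩ S, reach(A, x) ≥ ρ and |⟨v, e₂⟩| ≥ η|v| whenever v ∈ Nor(A, x). Then A ∩ S is connected. -/
open Metric Set Filter
open scoped ENNReal RealInnerProductSpace Topology NNReal

noncomputable section

variable {E : Type*} [NormedAddCommGroup E] [InnerProductSpace ℝ E]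

/-- `x` has a unique nearest point in `A`. -/
def UnpPt (A : Set E) (x : E) : Prop :=
  ∃! a, a ∈ A ∧ dist x a = Metric.infDist x A

/-- The reach of `A` at a point `a` (Federer). -/
def locReach (A : Set E) (a : E) : ℝ≥0∞ :=
  ⨆ (r : ℝ≥0) (_ : ∀ x : E, dist x a < (r : ℝ) → UnpPt A x), (r : ℝ≥0∞)

/-- The (global) reach of `A`. -/
def setReach (A : Set E) : ℝ≥0∞ := ⨅ a ∈ A, locReach A a

/-- The tangent cone of `A` at `a` in the sense of Federer. -/
def Tan (A : Set E) (a : E) : Set E :=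
  {u | u = 0 ∨ ∃ (x : ℕ → E) (r : ℕ → ℝ),
    (∀ i, x i ∈ A ∧ x i ≠ a ∧ 0 < r i) ∧
    Tendsto x atTop (nhds a) ∧
    Tendsto (fun i => r i • (x i - a)) atTop (nhds u)}

/-- The normal cone of `A` at `a`: the dual cone of the tangent cone. -/
def Nor (A : Set E) (a : E) : Set E :=
  {u | ∀ v ∈ Tan A a, ⟪u, v⟫ ≤ 0}

section aux
variable {F : Type*} [NormedAddCommGroup F] [InnerProductSpace ℝ F]

lemma aux_mem_of_closure {A : Set F} {z c : F} {r : ℝ} (hr : 0 < r)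
    (hU : ∀ y, dist y z < r → UnpPt A y) (hc : c ∈ closure A)
    (hd : dist z c = infDist z A) : c ∈ A := by
  have hne : A.Nonempty := closure_nonempty_iff.1 ⟨c, hc⟩
  set D := dist z c with hD
  have hD0 : 0 ≤ D := dist_nonneg
  obtain ⟨θ, hθ0, hθ1, hθr⟩ : ∃ θ : ℝ, 0 < θ ∧ θ < 1 ∧ θ * D < r := by
    refine ⟨min (1/2) (r / (2 * (D + 1))), by positivity, ?_, ?_⟩
    · exact lt_of_le_of_lt (min_le_left _ _) (by norm_num)
    · have h1 : min (1/2) (r / (2 * (D + 1))) ≤ r / (2 * (D + 1)) := min_le_right _ _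
      have h2 : r / (2 * (D + 1)) * D ≤ r / 2 := by
        rw [div_mul_eq_mul_div, div_le_div_iff₀ (by positivity) (by norm_num)]
        nlinarith
      nlinarith [mul_le_mul_of_nonneg_right h1 hD0]
  have hw : ‖c - z‖ = D := by rw [hD, dist_comm, dist_eq_norm]
  obtain ⟨a, ⟨haA, had⟩, -⟩ := hU (z + θ • (c - z)) (by
    rw [dist_eq_norm, add_sub_cancel_left, norm_smul, hw, Real.norm_of_nonneg hθ0.le]
    exact hθr)
  have h1 : ‖(a - z) - θ • (c - z)‖ ≤ (1 - θ) * D := by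
    have e1 : ‖(a - z) - θ • (c - z)‖ = infDist (z + θ • (c - z)) A := by
      rw [← had, dist_comm, dist_eq_norm]; congr 1; abel
    rw [e1, ← infDist_closure]
    refine (infDist_le_dist_of_mem hc).trans ?_
    rw [dist_eq_norm]
    have : z + θ • (c - z) - c = (-(1 - θ)) • (c - z) := by module
    rw [this, norm_smul, hw, norm_neg, Real.norm_of_nonneg (by linarith)]
  have h2 : D ≤ ‖a - z‖ := by
    rw [hd, ← dist_eq_norm, dist_comm]; exact infDist_le_dist_of_mem haA
  have h3 : ‖(a - z) - θ • (c - z)‖ ^ 2 ≤ ((1 - θ) * D) ^ 2 := by gcongr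
  rw [norm_sub_sq_real, inner_smul_right, norm_smul, hw, Real.norm_of_nonneg hθ0.le] at h3
  have h4 : ‖(a - z) - (c - z)‖ ^ 2 = ‖a - z‖ ^ 2 - 2 * inner ℝ (a - z) (c - z) + D ^ 2 := by
    rw [norm_sub_sq_real, hw]
  have h5 : D ^ 2 ≤ ‖a - z‖ ^ 2 := by gcongr
  have h6 : θ * ‖(a - z) - (c - z)‖ ^ 2 ≤ 0 := by
    rw [h4]; nlinarith
  have h7 : ‖(a - z) - (c - z)‖ = 0 := by
    by_contra h
    have : 0 < ‖(a - z) - (c - z)‖ ^ 2 := by positivity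
    nlinarith
  have : a = c := by
    rw [norm_eq_zero] at h7
    have : a - c = 0 := by rw [← h7]; abel
    exact sub_eq_zero.1 this
  exact this ▸ haA

lemma aux_ascent [ProperSpace F] {A : Set F} {z a w : F} {r : ℝ} (hr : 0 < r)
    (hU : ∀ y, dist y z < r → UnpPt A y) (haA : a ∈ A) (had : dist z a = infDist z A)
    (hw : 0 < inner ℝ w (z - a)) :
    ∃ h : ℝ, 0 < h ∧ h ≤ 1 ∧ infDist z A < infDist (z + h • w) A := by
  by_contra! hcon
  let h : ℕ → ℝ := fun k => 1 / ((k : ℝ) + 1)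
  have hh0 : ∀ k, 0 < h k := fun k => by positivity
  have hh1 : ∀ k, h k ≤ 1 := fun k => by
    simp only [h]; rw [div_le_one (by positivity)]; linarith [(Nat.cast_nonneg k : (0:ℝ) ≤ k)]
  have hht : Tendsto h atTop (𝓝 0) := tendsto_one_div_add_atTop_nhds_zero_nat
  have hyt : Tendsto (fun k => z + h k • w) atTop (𝓝 z) := by
    simpa using (tendsto_const_nhds (x := z)).add (hht.smul_const w)
  have hne : A.Nonempty := ⟨a, haA⟩
  have key : ∀ k, ∃ b ∈ A, dist (z + h k • w) b < infDist (z + h k • w) A + h k * h k := by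
    intro k
    have := (infDist_lt_iff (x := z + h k • w) (r := infDist (z + h k • w) A + h k * h k) hne).1
      (by have := hh0 k; nlinarith)
    exact this
  choose b hbA hb using key
  have hbb : ∀ k, b k ∈ closedBall z (infDist z A + 1 + ‖w‖) := by
    intro k
    rw [mem_closedBall, dist_comm]
    have h1 : dist z (b k) ≤ dist z (z + h k • w) + dist (z + h k • w) (b k) := dist_triangle _ _ _
    have h2 : dist z (z + h k • w) ≤ ‖w‖ := by
      rw [dist_eq_norm, sub_add_cancel_left, norm_neg, norm_smul, Real.norm_of_nonneg (hh0 k).le]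
      nlinarith [hh1 k, norm_nonneg w]
    have h3 := hcon (h k) (hh0 k) (hh1 k)
    have := hb k
    nlinarith [hh0 k, hh1 k]
  obtain ⟨c, -, φ, hφ, hc⟩ := (isCompact_closedBall z _).tendsto_subseq hbb
  have hcc : c ∈ closure A := mem_closure_of_tendsto hc (Eventually.of_forall fun k => hbA _)
  have hdc : dist z c = infDist z A := by
    apply le_antisymm
    · have t1 : Tendsto (fun k => dist (z + h (φ k) • w) (b (φ k))) atTop (𝓝 (dist z c)) :=
        (hyt.comp hφ.tendsto_atTop).dist hc
      have hht' := hht.comp hφ.tendsto_atTop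
      have t2 : Tendsto (fun k => infDist z A + h (φ k) * h (φ k)) atTop (𝓝 (infDist z A)) := by
        simpa using (tendsto_const_nhds (x := infDist z A)).add (hht'.mul hht')
      refine le_of_tendsto_of_tendsto' t1 t2 fun k => ?_
      linarith [hb (φ k), hcon _ (hh0 (φ k)) (hh1 (φ k))]
    · rw [← infDist_closure]; exact infDist_le_dist_of_mem hcc
  have hcA := aux_mem_of_closure hr hU hcc hdc
  have hca : c = a := (hU z (by simpa using hr)).unique ⟨hcA, hdc⟩ ⟨haA, had⟩
  subst hca
  -- contradiction
  have t3 : Tendsto (fun k => 2 * inner ℝ w (z - b (φ k)) + h (φ k) * ‖w‖ ^ 2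
      - h (φ k) * (2 * infDist z A + 1)) atTop (𝓝 (2 * inner ℝ w (z - c))) := by
    have hht' := hht.comp hφ.tendsto_atTop
    have i1 : Tendsto (fun k => inner ℝ w (z - b (φ k))) atTop (𝓝 (inner ℝ w (z - c))) :=
      (tendsto_const_nhds (x := w)).inner ((tendsto_const_nhds (x := z)).sub hc)
    simpa using ((i1.const_mul 2).add (hht'.mul_const (‖w‖ ^ 2))).sub
      (hht'.mul_const (2 * infDist z A + 1))
  have : 2 * inner ℝ w (z - c) ≤ 0 := by
    refine le_of_tendsto' t3 fun k => ?_
    set B := b (φ k)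
    set H := h (φ k) with hH
    have H0 : 0 < H := hh0 _
    have H1 : H ≤ 1 := hh1 _
    have e1 : dist (z + H • w) B ≤ infDist z A + H * H := by
      linarith [hb (φ k), hcon _ (hh0 (φ k)) (hh1 (φ k))]
    have e2 : infDist z A ≤ ‖z - B‖ := by
      rw [← dist_eq_norm]; exact infDist_le_dist_of_mem (hbA _)
    have e3 : ‖(z - B) + H • w‖ ^ 2 ≤ (infDist z A + H * H) ^ 2 := by
      rw [dist_eq_norm] at e1
      have : z - B + H • w = z + H • w - B := by abel
      rw [this]; gcongr
    rw [norm_add_sq_real, inner_smul_right, norm_smul, Real.norm_of_nonneg H0.le,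
      real_inner_comm] at e3
    have I0 : 0 ≤ infDist z A := infDist_nonneg
    have e4 : infDist z A ^ 2 ≤ ‖z - B‖ ^ 2 := by gcongr
    have e5 : H * (2 * inner ℝ w (z - B) + H * ‖w‖ ^ 2 - H * (2 * infDist z A + 1)) ≤ 0 := by
      have hHH : H * H ≤ 1 := by nlinarith
      have : (H * H) * (H * H) ≤ H * H := by nlinarith [mul_pos H0 H0]
      nlinarith
    by_contra hpos
    push Not at hpos
    nlinarith [mul_pos H0 hpos]
  linarith

lemma aux_step [ProperSpace F] {A : Set F} {x v : F} {τ s r : ℝ} (hs : 0 < s) (hsτ : s < τ)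
    (hsr : s < r) (hv : ‖v‖ = 1)
    (hU : ∀ y, dist y (x + τ • v) < r → UnpPt A y) (hxA : x ∈ A)
    (hτ : infDist (x + τ • v) A = τ) : infDist (x + (τ + s) • v) A = τ + s := by
  set y := x + τ • v with hy
  obtain ⟨z, hz, hmax⟩ := (isCompact_closedBall y s).exists_isMaxOn
    ⟨y, mem_closedBall_self hs.le⟩ (continuous_infDist_pt A).continuousOn
  have hzs : dist z y ≤ s := hz
  have hUz : ∀ y', dist y' z < r - s → UnpPt A y' := fun y' hy' => hU y' (by
    linarith [dist_triangle y' z y])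
  obtain ⟨c, ⟨hcA, hcd⟩, -⟩ := hUz z (by simpa using hsr)
  set D := infDist z A with hD
  have hDτ : τ ≤ D := by
    rw [← hτ]; exact hmax (mem_closedBall_self hs.le)
  have hD0 : 0 < D := by linarith
  set n := D⁻¹ • (z - c) with hn
  have hzc : ‖z - c‖ = D := by rw [← dist_eq_norm, hcd]
  have hn1 : ‖n‖ = 1 := by
    rw [hn, norm_smul, hzc, norm_inv, Real.norm_of_nonneg hD0.le, inv_mul_cancel₀ hD0.ne']
  have hzcn : z - c = D • n := by rw [hn, smul_smul, mul_inv_cancel₀ hD0.ne', one_smul]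
  have hle : inner ℝ (y + s • n - z) (z - c) ≤ 0 := by
    by_contra! hpos
    obtain ⟨h, h0, h1, hlt⟩ := aux_ascent (by linarith) hUz hcA hcd hpos
    have hmem : z + h • (y + s • n - z) ∈ closedBall y s := by
      apply (convex_closedBall y s).add_smul_sub_mem hz _ ⟨h0.le, h1⟩
      rw [mem_closedBall, dist_eq_norm, add_sub_cancel_left, norm_smul, hn1,
        Real.norm_of_nonneg hs.le, mul_one]
    exact absurd (hmax hmem) (not_le.2 hlt)
  have hsn : s ≤ inner ℝ (z - y) n := by
    rw [hzcn, inner_smul_right] at hle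
    have e : y + s • n - z = s • n - (z - y) := by abel
    rw [e, inner_sub_left, inner_smul_left, real_inner_self_eq_norm_sq, hn1] at hle
    simp at hle
    nlinarith
  have hzy : z - y = s • n := by
    have : ‖(z - y) - s • n‖ ^ 2 ≤ 0 := by
      rw [norm_sub_sq_real, inner_smul_right, norm_smul, hn1, Real.norm_of_nonneg hs.le]
      rw [dist_eq_norm] at hzs
      have : ‖z - y‖ ^ 2 ≤ s ^ 2 := by gcongr
      nlinarith
    have h0 : ‖(z - y) - s • n‖ = 0 := by
      have := norm_nonneg ((z - y) - s • n); nlinarith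
    exact sub_eq_zero.1 (norm_eq_zero.1 h0)
  have hyc : y - c = (D - s) • n := by
    rw [sub_smul, ← hzcn, ← hzy]; abel
  have hdyc : dist y c = D - s := by
    rw [dist_eq_norm, hyc, norm_smul, hn1, Real.norm_of_nonneg (by linarith), mul_one]
  have hyA : infDist y A = D - s := by
    apply le_antisymm
    · rw [← hdyc]; exact infDist_le_dist_of_mem hcA
    · have := infDist_le_infDist_add_dist (s := A) (x := z) (y := y)
      linarith
  have hyx : dist y x = τ := by
    rw [hy, dist_eq_norm, add_sub_cancel_left, norm_smul, hv, Real.norm_of_nonneg (by linarith),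
      mul_one]
  have hcx : c = x := (hU y (by simpa using hs.trans hsr)).unique ⟨hcA, by rw [hdyc, hyA]⟩
    ⟨hxA, by rw [hyx, hτ]⟩
  have hDs : D - s = τ := by rw [← hyA, hτ]
  have hτ0 : τ ≠ 0 := by linarith
  have hnv : n = v := by
    have : τ • n = τ • v := by
      rw [← hDs, ← hyc, hcx, hy, hDs]; abel
    exact smul_right_injective F hτ0 this
  have : x + (τ + s) • v = z := by
    rw [add_smul, ← add_assoc, ← hy, ← hnv, ← hzy]; abel
  rw [this]; linarith

lemma aux_extend [ProperSpace F] {A : Set F} {p x v : F} {d R r : ℝ} (hd : 0 < d) (hdR : d ≤ R)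
    (hv : ‖v‖ = 1) (hU : ∀ y, dist y p < r → UnpPt A y) (hxA : x ∈ A)
    (hxR : dist x p + R < r) (h : infDist (x + d • v) A = d) :
    infDist (x + R • v) A = R := by
  have hcont : Continuous fun t : ℝ => infDist (x + t • v) A :=
    (continuous_infDist_pt A).comp (by fun_prop)
  have hclosed : IsClosed {t : ℝ | infDist (x + t • v) A = t} := isClosed_eq hcont continuous_id
  have hcomp : IsCompact (Icc d R ∩ {t : ℝ | infDist (x + t • v) A = t}) :=
    isCompact_Icc.inter_right hclosed
  obtain ⟨τ, ⟨⟨hdτ, hτR⟩, hτ⟩, hmax⟩ := hcomp.exists_isMaxOn ⟨d, ⟨le_rfl, hdR⟩, h⟩ continuousOn_id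
  rcases hτR.eq_or_lt with e | hlt
  · rw [← e]; exact hτ
  exfalso
  set s := min (d / 2) (R - τ) with hs
  have hs0 : 0 < s := lt_min (by linarith) (by linarith)
  have hsd : s ≤ d / 2 := min_le_left _ _
  have hsR : s ≤ R - τ := min_le_right _ _
  have hn : dist (x + τ • v) x = τ := by
    rw [dist_eq_norm, add_sub_cancel_left, norm_smul, hv, Real.norm_of_nonneg (by linarith),
      mul_one]
  have := aux_step (A := A) (x := x) (v := v) (τ := τ) (s := s) (r := r - dist x p - τ) hs0
    (by linarith) (by linarith) hv (fun y hy => hU y (by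
      have := dist_triangle4 y (x + τ • v) x p
      linarith)) hxA hτ
  have h2 := hmax (a := τ + s) ⟨⟨by linarith, by linarith⟩, this⟩
  simp at h2
  linarith

lemma aux_ineq {A : Set F} {x v b : F} {R : ℝ} (hR : 0 < R) (hv : ‖v‖ = 1)
    (h : infDist (x + R • v) A = R) (hb : b ∈ A) :
    2 * R * inner ℝ (b - x) v ≤ ‖b - x‖ ^ 2 := by
  have h1 : R ≤ ‖(b - x) - R • v‖ := by
    conv_lhs => rw [← h]
    refine (infDist_le_dist_of_mem hb).trans_eq ?_
    rw [dist_comm, dist_eq_norm]; congr 1; abel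
  have h2 : R ^ 2 ≤ ‖(b - x) - R • v‖ ^ 2 := by gcongr
  rw [norm_sub_sq_real, inner_smul_right, norm_smul, hv, Real.norm_of_nonneg hR.le] at h2
  linarith

lemma aux_nor {A : Set F} {p v : F} {R : ℝ} (hR : 0 < R)
    (h : ∀ b ∈ A, 2 * R * inner ℝ (b - p) v ≤ ‖b - p‖ ^ 2) : v ∈ Nor A p := by
  rintro u (rfl | ⟨x, r, hx, hxt, hu⟩)
  · simp
  have t1 : Tendsto (fun i => 2 * R * inner ℝ v (r i • (x i - p))) atTop
      (𝓝 (2 * R * inner ℝ v u)) :=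
    ((tendsto_const_nhds (x := v)).inner hu).const_mul _
  have t2 : Tendsto (fun i => ‖r i • (x i - p)‖ * ‖x i - p‖) atTop (𝓝 (‖u‖ * ‖p - p‖)) :=
    hu.norm.mul (hxt.sub_const p).norm
  have := le_of_tendsto_of_tendsto' t1 t2 fun i => by
    have h1 := h _ (hx i).1
    have h2 := (hx i).2.2
    rw [inner_smul_right, norm_smul, Real.norm_of_nonneg h2.le, real_inner_comm]
    nlinarith
  simp at this
  nlinarith

/-- Existence of a normal at `p` making a nonnegative product with `e`. -/
lemma aux_exists_normal [ProperSpace F] {A : Set F} {p e : F} {R r g : ℝ} (hR : 0 < R)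
    (hRr : R < r) (he : ‖e‖ = 1) (hpA : p ∈ A) (hU : ∀ y, dist y p < r → UnpPt A y)
    (hg : 0 < g) (hgap : ∀ t, 0 < t → t < g → p + t • e ∉ A) :
    ∃ v, ‖v‖ = 1 ∧ 0 ≤ inner ℝ v e ∧ ∀ b ∈ A, 2 * R * inner ℝ (b - p) v ≤ ‖b - p‖ ^ 2 := by
  obtain ⟨m, hm0, hmg, hmR, hmr⟩ : ∃ m : ℝ, 0 < m ∧ m < g ∧ m ≤ R ∧ 2 * m + R < r := by
    refine ⟨min (g / 2) (min R ((r - R) / 3)), ?_, ?_, ?_, ?_⟩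
    · have : 0 < r - R := by linarith
      positivity
    · exact (min_le_left _ _).trans_lt (by linarith)
    · exact (min_le_right _ _).trans (min_le_left _ _)
    · have := (min_le_right (g / 2) (min R ((r - R) / 3))).trans (min_le_right _ _)
      linarith
  have key : ∀ t : ℝ, 0 < t → t ≤ m → ∃ x v : F, ‖x - p‖ ≤ 2 * t ∧ ‖v‖ = 1 ∧
      - (2 * t) / R ≤ inner ℝ v e ∧ ∀ b ∈ A, 2 * R * inner ℝ (b - x) v ≤ ‖b - x‖ ^ 2 := by
    intro t ht0 htm
    have hyp : dist (p + t • e) p = t := by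
      rw [dist_eq_norm, add_sub_cancel_left, norm_smul, he, Real.norm_of_nonneg ht0.le, mul_one]
    obtain ⟨x, ⟨hxA, hxd⟩, -⟩ := hU (p + t • e) (by linarith)
    set y := p + t • e with hy
    set d := infDist y A with hd
    have hdt : d ≤ t := by rw [← hyp]; exact infDist_le_dist_of_mem hpA
    have hd0 : 0 < d := by
      rw [← hxd]
      apply dist_pos.2
      intro h
      exact hgap t ht0 (by linarith) (by rw [← hy, h]; exact hxA)
    have hxp : dist x p ≤ 2 * t := by
      have := dist_triangle_left x p y
      linarith
    have hyx : ‖y - x‖ = d := by rw [← dist_eq_norm, hxd]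
    set v := d⁻¹ • (y - x) with hv
    have hv1 : ‖v‖ = 1 := by
      rw [hv, norm_smul, hyx, norm_inv, Real.norm_of_nonneg hd0.le, inv_mul_cancel₀ hd0.ne']
    have hdv : d • v = y - x := by rw [hv, smul_smul, mul_inv_cancel₀ hd0.ne', one_smul]
    have hext : infDist (x + R • v) A = R := by
      refine aux_extend hd0 (by linarith) hv1 hU hxA (by linarith) ?_
      rw [hdv, add_sub_cancel]
    refine ⟨x, v, by rwa [← dist_eq_norm], hv1, ?_, fun b hb => aux_ineq hR hv1 hext hb⟩
    have h1 := aux_ineq hR hv1 hext hpA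
    have h2 : p - x = d • v - t • e := by rw [hdv, hy]; abel
    have h3 : ‖p - x‖ ^ 2 ≤ (2 * t) ^ 2 := by
      rw [← dist_eq_norm, dist_comm]; gcongr
    have h4 : inner ℝ (p - x) v = d - t * inner ℝ v e := by
      clear_value v
      rw [h2, inner_sub_left, real_inner_smul_left, real_inner_smul_left,
        real_inner_self_eq_norm_sq, hv1, real_inner_comm]
      ring
    rw [h4] at h1
    rw [div_le_iff₀ hR]
    have h5 : 0 ≤ t * (2 * t + R * inner ℝ v e) := by nlinarith [mul_pos hR hd0]
    have := nonneg_of_mul_nonneg_right h5 ht0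
    linarith
  let t : ℕ → ℝ := fun k => m * (1 / ((k : ℝ) + 1))
  have ht0 : ∀ k, 0 < t k := fun k => by positivity
  have htm : ∀ k, t k ≤ m := fun k => by
    have : 1 / ((k : ℝ) + 1) ≤ 1 := by
      rw [div_le_one (by positivity)]; linarith [(Nat.cast_nonneg k : (0:ℝ) ≤ k)]
    simp only [t]; nlinarith
  have htt : Tendsto t atTop (𝓝 0) := by
    simpa [t] using (tendsto_one_div_add_atTop_nhds_zero_nat (𝕜 := ℝ)).const_mul m
  choose x v hx hv hve hb using fun k => key (t k) (ht0 k) (htm k)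
  obtain ⟨w, hw, φ, hφ, hvw⟩ := (isCompact_sphere (0 : F) 1).tendsto_subseq
    (x := v) (fun k => by simp [hv k])
  have htφ := htt.comp hφ.tendsto_atTop
  have hxt : Tendsto (fun k => x (φ k)) atTop (𝓝 p) := by
    rw [tendsto_iff_norm_sub_tendsto_zero]
    refine squeeze_zero (fun _ => norm_nonneg _) (fun k => hx (φ k)) ?_
    simpa using htφ.const_mul 2
  refine ⟨w, by simpa using hw, ?_, fun b hbA => ?_⟩
  · have t1 : Tendsto (fun k => -(2 * t (φ k)) / R) atTop (𝓝 0) := by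
      simpa using ((htφ.const_mul 2).neg).div_const R
    exact le_of_tendsto_of_tendsto' t1 (hvw.inner tendsto_const_nhds) fun k => hve _
  · have t1 := ((tendsto_const_nhds (x := b)).sub hxt)
    exact le_of_tendsto_of_tendsto' ((t1.inner hvw).const_mul (2 * R)) (t1.norm.pow 2)
      fun k => hb _ b hbA

lemma aux_reach {A : Set F} {p : F} {R ρ : ℝ} (hR : 0 < R) (h : R < ρ)
    (hr : ENNReal.ofReal ρ ≤ locReach A p) :
    ∃ r, R < r ∧ ∀ y, dist y p < r → UnpPt A y := by
  have : ENNReal.ofReal R < locReach A p :=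
    lt_of_lt_of_le ((ENNReal.ofReal_lt_ofReal_iff (by linarith)).2 h) hr
  rw [locReach, lt_iSup_iff] at this
  obtain ⟨r, hr⟩ := this
  rw [lt_iSup_iff] at hr
  obtain ⟨hU, hr⟩ := hr
  refine ⟨r, ?_, hU⟩
  rw [ENNReal.ofReal, ENNReal.coe_lt_coe] at hr
  exact (Real.toNNReal_lt_iff_lt_coe hR.le).1 hr

end aux

/-- A vertical segment meets a set of positive reach (with normals bounded away from
horizontal) in a connected set. -/
theorem stmt10 (δ ρ η : ℝ) (hδ : 0 < δ) (hρ : 0 < ρ) (hη0 : 0 < η) (hη1 : η < 1)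
    (hδρη : δ < ρ * η)
    (A : Set (EuclideanSpace ℝ (Fin 2))) (s₀ t₁ t₂ : ℝ) (hlen : t₂ - t₁ ≤ 2 * δ)
    (S : Set (EuclideanSpace ℝ (Fin 2)))
    (hS : S = {x : EuclideanSpace ℝ (Fin 2) | x 0 = s₀ ∧ x 1 ∈ Icc t₁ t₂})
    (hreach : ∀ x ∈ A ∩ S, ENNReal.ofReal ρ ≤ locReach A x)
    (hnor : ∀ x ∈ A ∩ S, ∀ v ∈ Nor A x,
      η * ‖v‖ ≤ |⟪v, EuclideanSpace.single 1 (1:ℝ)⟫|) :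
    IsPreconnected (A ∩ S) := by
  set e : EuclideanSpace ℝ (Fin 2) := EuclideanSpace.single 1 (1:ℝ) with he
  have he1 : ‖e‖ = 1 := by simp [he]
  obtain ⟨R, hR1, hRρ⟩ : ∃ R, δ / η < R ∧ R < ρ :=
    exists_between (by rwa [div_lt_iff₀ hη0])
  have hR0 : 0 < R := lt_trans (by positivity) hR1
  have hRη : δ < R * η := by rwa [div_lt_iff₀ hη0] at hR1
  let o : EuclideanSpace ℝ (Fin 2) := EuclideanSpace.single 0 s₀
  let γ : ℝ → EuclideanSpace ℝ (Fin 2) := fun t => o + t • e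
  have hγ0 : ∀ t, γ t 0 = s₀ := fun t => by simp [γ, o, he]
  have hγ1 : ∀ t, γ t 1 = t := fun t => by simp [γ, o, he]
  have hγc : Continuous γ := by fun_prop
  have hγS : ∀ t ∈ Icc t₁ t₂, γ t ∈ S := fun t ht => by
    rw [hS]; exact ⟨hγ0 t, by rwa [hγ1]⟩
  have hγd : ∀ t u, dist (γ t) (γ u) = |t - u| := fun t u => by
    have : γ t - γ u = (t - u) • e := by simp only [γ]; module
    rw [dist_eq_norm, this, norm_smul, he1, mul_one, Real.norm_eq_abs]
  let K : Set ℝ := {t | t ∈ Icc t₁ t₂ ∧ γ t ∈ A}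
  have himg : A ∩ S = γ '' K := by
    ext x
    constructor
    · rintro ⟨hxA, hxS⟩
      rw [hS] at hxS
      have : γ (x 1) = x := by
        ext i; fin_cases i
        · exact (hγ0 _).trans hxS.1.symm
        · exact hγ1 _
      exact ⟨x 1, ⟨hxS.2, this.symm ▸ hxA⟩, this⟩
    · rintro ⟨t, ⟨ht, htA⟩, rfl⟩
      exact ⟨htA, hγS t ht⟩
  rw [himg]
  refine IsPreconnected.image ?_ γ hγc.continuousOn
  apply Set.OrdConnected.isPreconnected
  refine ⟨fun a ha b hb c hc => ?_⟩
  by_contra hcK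
  have hcI : c ∈ Icc t₁ t₂ := ⟨ha.1.1.trans hc.1, hc.2.trans hb.1.2⟩
  -- last point of K before c
  let M : Set ℝ := K ∩ Icc a c
  have hMne : M.Nonempty := ⟨a, ha, le_rfl, hc.1⟩
  have hMb : BddAbove M := ⟨c, fun t ht => ht.2.2⟩
  set q := sSup M with hq
  have haq : a ≤ q := le_csSup hMb ⟨ha, le_rfl, hc.1⟩
  have hqc : q ≤ c := csSup_le hMne fun t ht => ht.2.2
  have hqI : q ∈ Icc t₁ t₂ := ⟨ha.1.1.trans haq, hqc.trans hcI.2⟩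
  have hqcl : γ q ∈ closure A := by
    have h1 : q ∈ closure M := csSup_mem_closure hMne hMb
    exact map_mem_closure hγc h1 fun t ht => ht.1.2
  have hqA : γ q ∈ A := by
    obtain ⟨t, htM, ht⟩ := exists_lt_of_lt_csSup hMne (show q - R < sSup M by linarith)
    have htq : t ≤ q := le_csSup hMb htM
    obtain ⟨r, hRr, hU⟩ := aux_reach hR0 hRρ (hreach (γ t) ⟨htM.1.2, hγS t htM.1.1⟩)
    have hdt : dist (γ q) (γ t) < R := by
      rw [hγd, abs_of_nonneg (by linarith)]; linarith
    refine aux_mem_of_closure (z := γ q) (r := r - R) (by linarith) (fun y hy => hU y ?_) hqcl ?_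
    · linarith [dist_triangle y (γ q) (γ t)]
    · rw [dist_self, ← infDist_closure, infDist_zero_of_mem hqcl]
  have hqK : q ∈ K := ⟨hqI, hqA⟩
  have hqc' : q < c := lt_of_le_of_ne hqc fun h => hcK (h ▸ hqK)
  have hpm : γ q ∈ A ∩ S := ⟨hqA, hγS q hqI⟩
  obtain ⟨r, hRr, hU⟩ := aux_reach hR0 hRρ (hreach _ hpm)
  have hadd : ∀ t, γ q + t • e = γ (q + t) := fun t => by simp only [γ]; module
  obtain ⟨v, hv1, hve, hvb⟩ := aux_exists_normal (g := c - q) hR0 hRr he1 hqA hU (by linarith)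
    (fun t ht0 htc hmem => by
      rw [hadd] at hmem
      have : q + t ∈ M := ⟨⟨⟨by linarith [hqI.1], by linarith [hcI.2]⟩, hmem⟩,
        by linarith, by linarith⟩
      linarith [le_csSup hMb this])
  have h1 := hnor _ hpm v (aux_nor hR0 hvb)
  rw [abs_of_nonneg hve, hv1, mul_one] at h1
  have h2 := hvb _ hb.2
  have h3 : γ b - γ q = (b - q) • e := by simp only [γ]; module
  have hL : 0 < b - q := by linarith [hc.2]
  rw [h3, inner_smul_left, norm_smul, he1, Real.norm_of_nonneg hL.le, real_inner_comm] at h2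
  simp only [conj_trivial, mul_one] at h2
  have h4 : b - q ≤ 2 * δ := by linarith [hb.1.2, hqI.1]
  have h5 : R * η ≤ R * inner ℝ v e := by gcongr
  have h6 : (b - q) * (2 * (R * inner ℝ v e)) ≤ (b - q) * (b - q) := by nlinarith
  have h7 := le_of_mul_le_mul_left h6 hL
  linarith
end
end

section
/- Let φ : I → ℝ be a function on an interval I ⊆ ℝ with graph(φ) ⊆ A ⊆ ℝ². Let δ, ρ > 0 and 0 < η < 1 satisfy 2δ < ρη and diam(graph φ) ≤ 2δ, and suppose for every x ∈ graph φ we have reach(A, x) > ρ and there exists a unit vector v ∈ Nor(A, x) with ⟨v, e₂⟩ ≥ η. Then φ is Lipschitz. -/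
open Metric Set Filter
open scoped ENNReal RealInnerProductSpace Topology NNReal

noncomputable section

variable {E : Type*} [NormedAddCommGroup E] [InnerProductSpace ℝ E]

theorem locReach_unp {A : Set E} {x : E} {ρ : ℝ} (hρ : 0 < ρ)
    (h : ENNReal.ofReal ρ < locReach A x) :
    ∃ r : ℝ, ρ < r ∧ ∀ y : E, dist y x < r → UnpPt A y := by
  unfold locReach at h
  simp only [lt_iSup_iff] at h
  obtain ⟨r, hr, h⟩ := h
  refine ⟨r, ?_, hr⟩
  rw [← ENNReal.ofReal_coe_nnreal] at h
  exact (ENNReal.ofReal_lt_ofReal_iff_of_nonneg hρ.le).1 h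

/-- continuity of the nearest point projection -/
theorem proj_cont [ProperSpace E] {A : Set E} {x : E} {r : ℝ} (hx : x ∈ A)
    (hU : ∀ y : E, dist y x < r → UnpPt A y) {q a : E} (hq : dist q x < r / 2)
    (ha : a ∈ A) (hqa : dist q a = infDist q A) {ε : ℝ} (hε : 0 < ε) :
    ∃ κ > 0, ∀ q', dist q' q < κ → ∀ a' ∈ A, dist q' a' = infDist q' A → dist a' a < ε := by
  by_contra! hcon
  have hk : ∀ k : ℕ, ∃ q' a', dist q' q < 1 / ((k : ℝ) + 1) ∧ a' ∈ A ∧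
      dist q' a' = infDist q' A ∧ ε ≤ dist a' a := by
    intro k
    obtain ⟨q', h1, a', h2, h3, h4⟩ := hcon (1 / ((k : ℝ) + 1)) (by positivity)
    exact ⟨q', a', h1, h2, h3, h4⟩
  choose Q B hQ hBA hQB hBa using hk
  have hQlim : Tendsto Q atTop (𝓝 q) := by
    rw [tendsto_iff_dist_tendsto_zero]
    exact squeeze_zero (fun _ => dist_nonneg) (fun k => (hQ k).le)
      tendsto_one_div_add_atTop_nhds_zero_nat
  have hbd : ∀ k, B k ∈ closedBall q (dist q x + 2) := by
    intro k
    have h1 : dist (Q k) (B k) ≤ dist (Q k) x := by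
      rw [hQB]; exact infDist_le_dist_of_mem hx
    have h2 : dist (Q k) q ≤ 1 := (hQ k).le.trans (by
      rw [div_le_one (by positivity)]; have : (0 : ℝ) ≤ k := Nat.cast_nonneg k
      linarith)
    have h3 := dist_triangle (Q k) q x
    have h4 := dist_triangle (B k) (Q k) q
    rw [mem_closedBall]
    rw [dist_comm (B k) (Q k)] at h4
    linarith
  obtain ⟨b, -, f, hf, hlim⟩ := (isCompact_closedBall q (dist q x + 2)).tendsto_subseq hbd
  have hQf : Tendsto (Q ∘ f) atTop (𝓝 q) := hQlim.comp hf.tendsto_atTop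
  have hbcl : b ∈ closure A :=
    mem_closure_of_tendsto hlim (Eventually.of_forall fun k => hBA _)
  have hqb : dist q b = infDist q A := by
    have h1 : Tendsto (fun k => dist (Q (f k)) (B (f k))) atTop (𝓝 (dist q b)) :=
      hQf.dist hlim
    have h2 : Tendsto (fun k => infDist (Q (f k)) A) atTop (𝓝 (infDist q A)) :=
      ((continuous_infDist_pt A).tendsto q).comp hQf
    refine tendsto_nhds_unique h1 (h2.congr fun k => (hQB _).symm)
  have hbr : dist b x < r := by
    have h1 : infDist q A ≤ dist q x := infDist_le_dist_of_mem hx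
    have h2 := dist_triangle b q x
    rw [dist_comm b q] at h2
    linarith
  have hb : b ∈ A := by
    obtain ⟨c, ⟨hc, hbc⟩, -⟩ := hU b hbr
    rw [(mem_closure_iff_infDist_zero ⟨x, hx⟩).1 hbcl] at hbc
    rw [dist_eq_zero.1 hbc]; exact hc
  have hab : b = a := by
    have hr : dist q x < r := by have := dist_nonneg (x := q) (y := x); linarith
    exact (hU q hr).unique ⟨hb, hqb⟩ ⟨ha, hqa⟩
  have h5 : ε ≤ dist b a :=
    ge_of_tendsto (hlim.dist tendsto_const_nhds) (Eventually.of_forall fun k => hBa _)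
  rw [hab, dist_self] at h5
  linarith

/-- The distance function has slope one away from `A`. -/
theorem slope_one [ProperSpace E] {A : Set E} {x : E} {r : ℝ} (hx : x ∈ A)
    (hU : ∀ y : E, dist y x < r → UnpPt A y) {q : E} (hq : dist q x < r / 2)
    (hd : 0 < infDist q A) {ε κ : ℝ} (hε : 0 < ε) (hε1 : ε ≤ 1) (hκ : 0 < κ) :
    ∃ q', q' ≠ q ∧ dist q' q < κ ∧ infDist q A + (1 - ε) * dist q' q ≤ infDist q' A := by
  have hr : dist q x < r := by have := dist_nonneg (x := q) (y := x); linarith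
  obtain ⟨a, ⟨ha, hqa⟩, -⟩ := hU q hr
  set d := infDist q A with hd_def
  obtain ⟨κ', hκ', hc⟩ := proj_cont hx hU hq ha hqa (ε := d * ε / 2) (by positivity)
  set h := min (min κ κ') (r - dist q x) / 2 with hh_def
  have hmin : 0 < min (min κ κ') (r - dist q x) := by
    refine lt_min (lt_min hκ hκ') (by linarith)
  have hh : 0 < h := by positivity
  have hm1 : h < min (min κ κ') (r - dist q x) := by rw [hh_def]; linarith
  have h1 : h < κ := hm1.trans_le ((min_le_left _ _).trans (min_le_left _ _))
  have h2 : h < κ' := hm1.trans_le ((min_le_left _ _).trans (min_le_right _ _))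
  have h3 : h < r - dist q x := hm1.trans_le (min_le_right _ _)
  set n := d⁻¹ • (q - a) with hn
  have hqan : ‖q - a‖ = d := by rw [← dist_eq_norm, hqa]
  have hn1 : ‖n‖ = 1 := by
    rw [hn, norm_smul, hqan, Real.norm_of_nonneg (by positivity)]
    field_simp
  have hnq : ⟪n, q - a⟫ = d := by
    rw [hn, real_inner_smul_left, real_inner_self_eq_norm_sq, hqan]
    field_simp
  have hdq : dist (q + h • n) q = h := by
    rw [dist_eq_norm, add_sub_cancel_left, norm_smul, hn1, Real.norm_of_nonneg hh.le, mul_one]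
  refine ⟨q + h • n, ?_, by rw [hdq]; exact h1, ?_⟩
  · intro he
    rw [he, dist_self] at hdq
    linarith
  rw [hdq]
  have hr' : dist (q + h • n) x < r := by
    have := dist_triangle (q + h • n) q x
    linarith
  obtain ⟨a', ⟨ha', hqa'⟩, -⟩ := hU _ hr'
  have hcl := hc _ (by rw [hdq]; exact h2) a' ha' hqa'
  rw [← hqa']
  set D := dist (q + h • n) a' with hD
  have hm_le : dist q a' ≤ d + d * ε / 2 := by
    have := dist_triangle q a a'
    rw [dist_comm a a'] at this
    linarith
  have hm_ge : d ≤ dist q a' := infDist_le_dist_of_mem ha'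
  have hin : d - d * ε / 2 ≤ ⟪n, q - a'⟫ := by
    have e : q - a' = (q - a) - (a' - a) := by abel
    rw [e, inner_sub_right, hnq]
    have := real_inner_le_norm n (a' - a)
    rw [hn1, ← dist_eq_norm] at this
    linarith
  have hCS := real_inner_le_norm (q + h • n - a') (q - a')
  have e2 : q + h • n - a' = (q - a') + h • n := by abel
  rw [← dist_eq_norm, ← hD, e2, inner_add_left, real_inner_smul_left,
    real_inner_self_eq_norm_sq, ← dist_eq_norm] at hCS
  set m := dist q a' with hm
  have hmpos : 0 < m := by linarith
  have h6 : (1 - ε) * m ≤ ⟪n, q - a'⟫ := by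
    have : (1 - ε) * m ≤ (1 - ε) * (d + d * ε / 2) :=
      mul_le_mul_of_nonneg_left hm_le (by linarith)
    nlinarith [mul_pos hd hε, mul_pos (mul_pos hd hε) hε]
  have h7 : m * (m + (1 - ε) * h) ≤ m * D := by
    have := mul_le_mul_of_nonneg_left h6 hh.le
    nlinarith
  have h8 := le_of_mul_le_mul_left h7 hmpos
  linarith

/-- The distance function grows at unit speed. -/
theorem dist_grow [ProperSpace E] {A : Set E} {x : E} {r : ℝ} (hx : x ∈ A)
    (hU : ∀ y : E, dist y x < r → UnpPt A y) {p : E} {s : ℝ} (hs : 0 < s)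
    (hp : dist p x + s < r / 2) (hd : 0 < infDist p A) :
    ∃ q, dist q p ≤ s ∧ infDist p A + s ≤ infDist q A := by
  have hK := isCompact_closedBall p s
  have hne : (closedBall p s).Nonempty := ⟨p, mem_closedBall_self hs.le⟩
  obtain ⟨q, hq, hmax⟩ := hK.exists_isMaxOn hne (continuous_infDist_pt A).continuousOn
  refine ⟨q, hq, ?_⟩
  have key : ∀ ε : ℝ, 0 < ε → ε ≤ 1 → infDist p A + (1 - ε) * s ≤ infDist q A := by
    intro ε hε hε1
    obtain ⟨z, hz, hzmax⟩ := hK.exists_isMaxOn (f := fun y => infDist y A - (1 - ε) * dist y p)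
      hne (by
        refine Continuous.continuousOn ?_
        have := continuous_infDist_pt A
        fun_prop)
    have hz0 : infDist p A ≤ infDist z A - (1 - ε) * dist z p := by
      have := hzmax (mem_closedBall_self hs.le)
      simpa using this
    have hzq : infDist z A ≤ infDist q A := hmax hz
    have hzs : dist z p ≤ s := hz
    rcases hzs.lt_or_eq with hlt | heq
    · exfalso
      have hzx : dist z x < r / 2 := by
        have := dist_triangle z p x
        linarith
      have hzd : 0 < infDist z A := by
        have : 0 ≤ (1 - ε) * dist z p := mul_nonneg (by linarith) dist_nonneg
        linarith
      obtain ⟨z', hne', hz', hgrow⟩ := slope_one hx hU hzx hzd (ε := ε / 2) (κ := s - dist z p)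
        (by linarith) (by linarith) (by linarith)
      have htri := dist_triangle z' z p
      have hmem : z' ∈ closedBall p s := by
        rw [mem_closedBall]; linarith
      have h1 : infDist z' A - (1 - ε) * dist z' p ≤ infDist z A - (1 - ε) * dist z p :=
        hzmax hmem
      have h2 : 0 < dist z' z := dist_pos.2 hne'
      have h3 := mul_le_mul_of_nonneg_left htri (show 0 ≤ 1 - ε by linarith)
      nlinarith [mul_pos hε h2]
    · rw [heq] at hz0
      linarith
  refine le_of_forall_pos_le_add fun e he => ?_
  have hpos : 0 < min 1 (e / s) := lt_min one_pos (by positivity)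
  have := key (min 1 (e / s)) hpos (min_le_left _ _)
  have h2 : min 1 (e / s) * s ≤ e := by
    calc min 1 (e / s) * s ≤ e / s * s := mul_le_mul_of_nonneg_right (min_le_right _ _) hs.le
      _ = e := by field_simp
  linarith

theorem nor_small [ProperSpace E] {A : Set E} {x v : E} (hv : v ∈ Nor A x) {ε : ℝ} (hε : 0 < ε) :
    ∃ κ > 0, ∀ a ∈ A, dist a x < κ → ⟪v, a - x⟫ ≤ ε * ‖a - x‖ := by
  by_contra! hcon
  have hk : ∀ k : ℕ, ∃ a ∈ A, dist a x < 1 / ((k : ℝ) + 1) ∧ ε * ‖a - x‖ < ⟪v, a - x⟫ :=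
    fun k => hcon _ (by positivity)
  choose a haA hax hav using hk
  have hne : ∀ k, a k ≠ x := by
    intro k he
    have := hav k
    simp [he] at this
  have hpos : ∀ k, 0 < ‖a k - x‖ := fun k => norm_pos_iff.2 (sub_ne_zero.2 (hne k))
  have hlim : Tendsto a atTop (𝓝 x) := by
    rw [tendsto_iff_dist_tendsto_zero]
    exact squeeze_zero (fun _ => dist_nonneg) (fun k => (hax k).le)
      tendsto_one_div_add_atTop_nhds_zero_nat
  have hmem : ∀ k, ‖a k - x‖⁻¹ • (a k - x) ∈ closedBall (0 : E) 1 := by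
    intro k
    rw [mem_closedBall_zero_iff, norm_smul, norm_inv, norm_norm, inv_mul_cancel₀ (hpos k).ne']
  obtain ⟨u, -, f, hf, hu⟩ := (isCompact_closedBall (0 : E) 1).tendsto_subseq hmem
  have huT : u ∈ Tan A x := Or.inr ⟨a ∘ f, fun k => ‖a (f k) - x‖⁻¹,
    fun k => ⟨haA _, hne _, inv_pos.2 (hpos _)⟩, hlim.comp hf.tendsto_atTop, hu⟩
  have h1 := hv u huT
  have h2 : ε ≤ ⟪v, u⟫ := by
    refine ge_of_tendsto (tendsto_const_nhds.inner hu) (Eventually.of_forall fun k => ?_)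
    simp only [Function.comp]
    rw [real_inner_smul_right, inv_mul_eq_div, le_div_iff₀ (hpos _)]
    exact (hav _).le
  linarith

/-- Federer's inequality (with half the reach). -/
theorem federer [ProperSpace E] {A : Set E} {x v : E} {ρ : ℝ} (hρ : 0 < ρ) (hx : x ∈ A)
    (hreach : ENNReal.ofReal ρ < locReach A x) (hv : v ∈ Nor A x) (hv1 : ‖v‖ = 1)
    {b : E} (hb : b ∈ A) : ρ * ⟪v, b - x⟫ ≤ ‖b - x‖ ^ 2 := by
  obtain ⟨r, hr, hU⟩ := locReach_unp hρ hreach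
  set s := ρ / 2 with hs_def
  have hs : 0 < s := by positivity
  have key : ∀ ε : ℝ, 0 < ε → ε < 1 / 4 → s ≤ ‖b - x - s • v‖ + ε + s * (4 * ε) := by
    intro ε hε hε4
    obtain ⟨κ, hκ, hsm⟩ := nor_small hv hε
    obtain ⟨t, ht, htm⟩ := exists_between (show 0 < min (min (κ / 2) ε) (r / 2 - s) from
      lt_min (lt_min (by linarith) hε) (by rw [hs_def]; linarith))
    have ht1 : t < κ / 2 := htm.trans_le ((min_le_left _ _).trans (min_le_left _ _))
    have ht2 : t < ε := htm.trans_le ((min_le_left _ _).trans (min_le_right _ _))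
    have ht3 : t < r / 2 - s := htm.trans_le (min_le_right _ _)
    set p := x + t • v with hp
    have hpx : dist p x = t := by
      rw [hp, dist_eq_norm, add_sub_cancel_left, norm_smul, hv1, Real.norm_of_nonneg ht.le, mul_one]
    obtain ⟨a, ⟨ha, hpa⟩, -⟩ := hU p (by rw [hpx]; linarith)
    have hpat : dist p a ≤ t := by
      rw [hpa, ← hpx]; exact infDist_le_dist_of_mem hx
    have hax : dist a x < κ := by
      have := dist_triangle a p x
      rw [dist_comm a p] at this
      linarith
    have h1 := hsm a ha hax
    have hpa_eq : p - a = t • v - (a - x) := by rw [hp]; abel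
    have h2 : ‖a - x‖ ≤ 2 * ε * t := by
      have h3 : ‖p - a‖ ^ 2 ≤ t ^ 2 := by
        rw [← dist_eq_norm]; exact pow_le_pow_left₀ dist_nonneg hpat 2
      rw [hpa_eq, norm_sub_sq_real, norm_smul, hv1, Real.norm_of_nonneg ht.le,
        real_inner_smul_left] at h3
      rcases (norm_nonneg (a - x)).eq_or_lt with h0 | h0
      · rw [← h0]; positivity
      · have h4 : ‖a - x‖ * ‖a - x‖ ≤ ‖a - x‖ * (2 * ε * t) := by
          have := mul_le_mul_of_nonneg_left h1 ht.le
          nlinarith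
        exact le_of_mul_le_mul_left h4 h0
    set d := infDist p A with hd
    have hnd : ‖p - a‖ = d := by rw [← dist_eq_norm, hpa]
    have hdt : d ≤ t := by rw [← hpa]; exact hpat
    have hdt' : t - 2 * ε * t ≤ d := by
      rw [← hnd, hpa_eq]
      have := norm_sub_norm_le (t • v) (a - x)
      rw [norm_smul, hv1, Real.norm_of_nonneg ht.le, mul_one] at this
      linarith
    have hdpos : 0 < d := by nlinarith
    obtain ⟨q, hqp, hqd⟩ := dist_grow hx hU hs (p := p) (by rw [hpx]; linarith) hdpos
    have hqa : d + s ≤ ‖q - a‖ := by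
      rw [← dist_eq_norm]; exact hqd.trans (infDist_le_dist_of_mem ha)
    have hqb : d + s ≤ ‖q - b‖ := by
      rw [← dist_eq_norm]; exact hqd.trans (infDist_le_dist_of_mem hb)
    rw [dist_eq_norm] at hqp
    set n := d⁻¹ • (p - a) with hn
    have hqn : q - p = s • n := by
      have e : q - a = (q - p) + (p - a) := by abel
      have h5 : (d + s) ^ 2 ≤ ‖q - a‖ ^ 2 := pow_le_pow_left₀ (by positivity) hqa 2
      have h6 : ‖q - p‖ ^ 2 ≤ s ^ 2 := pow_le_pow_left₀ (norm_nonneg _) hqp 2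
      rw [e, norm_add_sq_real, hnd] at h5
      have h7 : s * d ≤ ⟪q - p, p - a⟫ := by nlinarith
      have hn1 : ‖n‖ = 1 := by
        rw [hn, norm_smul, hnd, Real.norm_of_nonneg (by positivity)]
        field_simp
      have h8 : s ≤ ⟪q - p, n⟫ := by
        rw [hn, real_inner_smul_right, inv_mul_eq_div, le_div_iff₀ hdpos]
        exact h7
      have h9 : ‖(q - p) - s • n‖ ^ 2 ≤ 0 := by
        rw [norm_sub_sq_real, norm_smul, hn1, Real.norm_of_nonneg hs.le, real_inner_smul_right]
        nlinarith
      have h10 : ‖(q - p) - s • n‖ = 0 := by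
        have := sq_nonneg ‖(q - p) - s • n‖
        exact pow_eq_zero_iff two_ne_zero |>.1 (le_antisymm h9 this)
      exact sub_eq_zero.1 (norm_eq_zero.1 h10)
    have hnv : ‖n - v‖ ≤ 4 * ε := by
      have e : t • (n - v) = (t - d) • n - (a - x) := by
        have : d • n = p - a := by rw [hn, smul_smul, mul_inv_cancel₀ hdpos.ne', one_smul]
        rw [sub_smul, this, hpa_eq, smul_sub]; abel
      have hn1 : ‖n‖ = 1 := by
        rw [hn, norm_smul, hnd, Real.norm_of_nonneg (by positivity)]
        field_simp
      have h5 : t * ‖n - v‖ ≤ (t - d) + ‖a - x‖ := by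
        have := norm_sub_le ((t - d) • n) (a - x)
        rw [← e, norm_smul, norm_smul, hn1, Real.norm_of_nonneg ht.le,
          Real.norm_of_nonneg (by linarith : 0 ≤ t - d), mul_one] at this
        exact this
      have h6 : t * ‖n - v‖ ≤ t * (4 * ε) := by nlinarith
      exact le_of_mul_le_mul_left h6 ht
    have e : q - b = -(b - x - s • v) + t • v + s • (n - v) := by
      have : q = s • n + p := by rw [← hqn]; abel
      rw [this, hp, smul_sub]; abel
    have h11 : ‖q - b‖ ≤ ‖b - x - s • v‖ + t + s * ‖n - v‖ := by
      rw [e]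
      refine (norm_add₃_le).trans ?_
      rw [norm_neg, norm_smul, norm_smul, hv1, Real.norm_of_nonneg ht.le,
        Real.norm_of_nonneg hs.le, mul_one]
    have := mul_le_mul_of_nonneg_left hnv hs.le
    linarith
  have hfin : s ≤ ‖b - x - s • v‖ := by
    refine le_of_forall_pos_le_add fun e he => ?_
    have hpos : 0 < min (1 / 8) (e / (1 + 4 * s)) := lt_min (by norm_num) (by positivity)
    have h1 := key _ hpos ((min_le_left _ _).trans_lt (by norm_num))
    have h2 : min (1 / 8) (e / (1 + 4 * s)) * (1 + 4 * s) ≤ e := by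
      calc _ ≤ e / (1 + 4 * s) * (1 + 4 * s) :=
            mul_le_mul_of_nonneg_right (min_le_right _ _) (by positivity)
        _ = e := by field_simp
    linarith
  have h3 : s ^ 2 ≤ ‖b - x - s • v‖ ^ 2 := pow_le_pow_left₀ hs.le hfin 2
  rw [norm_sub_sq_real, norm_smul, hv1, Real.norm_of_nonneg hs.le, real_inner_smul_right,
    real_inner_comm] at h3
  have : ρ = 2 * s := by rw [hs_def]; ring
  rw [this]
  linarith

/-- A function whose graph lies in a set of positive reach with normals uniformly
pointing upwards is Lipschitz. -/
theorem stmt11 (δ ρ η : ℝ) (hδ : 0 < δ) (hρ : 0 < ρ) (hη0 : 0 < η) (hη1 : η < 1)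
    (hδρη : 2 * δ < ρ * η)
    (I : Set ℝ) (hI : I.OrdConnected) (φ : ℝ → ℝ)
    (A G : Set (EuclideanSpace ℝ (Fin 2)))
    (hG : G = {x : EuclideanSpace ℝ (Fin 2) | x 0 ∈ I ∧ x 1 = φ (x 0)})
    (hGA : G ⊆ A)
    (hdiam : ∀ x ∈ G, ∀ y ∈ G, dist x y ≤ 2 * δ)
    (hreach : ∀ x ∈ G, ENNReal.ofReal ρ < locReach A x)
    (hnor : ∀ x ∈ G, ∃ v ∈ Nor A x, ‖v‖ = 1 ∧
      η ≤ ⟪v, EuclideanSpace.single 1 (1:ℝ)⟫) :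
    ∃ C : ℝ≥0, LipschitzOnWith C φ I := by
  have one_side : ∀ a ∈ I, ∀ b ∈ I, φ a ≤ φ b →
      (η - 2 * δ / ρ) * (φ b - φ a) ≤ (1 + 2 * δ / ρ) * |b - a| := by
    intro a ha b hb hab
    have hxG : (!₂[a, φ a] : EuclideanSpace ℝ (Fin 2)) ∈ G := by
      rw [hG]; simp [ha]
    have hyG : (!₂[b, φ b] : EuclideanSpace ℝ (Fin 2)) ∈ G := by
      rw [hG]; simp [hb]
    obtain ⟨v, hv, hv1, hvη⟩ := hnor _ hxG
    have hF := federer hρ (hGA hxG) (hreach _ hxG) hv hv1 (hGA hyG)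
    have hD := hdiam _ hyG _ hxG
    rw [dist_eq_norm] at hD
    have hv2 : η ≤ v 1 := by
      simpa [EuclideanSpace.inner_single_right] using hvη
    have hv0 : |v 0| ≤ 1 := by
      have := PiLp.norm_apply_le v 0
      rwa [hv1, Real.norm_eq_abs] at this
    have hin : ⟪v, (!₂[b, φ b] : EuclideanSpace ℝ (Fin 2)) - !₂[a, φ a]⟫
        = v 0 * (b - a) + v 1 * (φ b - φ a) := by
      rw [PiLp.inner_apply, Fin.sum_univ_two]
      simp [mul_comm]
    have hN : ‖(!₂[b, φ b] : EuclideanSpace ℝ (Fin 2)) - !₂[a, φ a]‖ ≤ |b - a| + (φ b - φ a) := by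
      rw [EuclideanSpace.norm_eq, Fin.sum_univ_two]
      apply Real.sqrt_le_iff.2
      constructor
      · have := abs_nonneg (b - a); linarith
      · simp
        nlinarith [abs_nonneg (b - a), sq_abs (b - a),
          mul_nonneg (abs_nonneg (b - a)) (sub_nonneg.2 hab)]
    rw [hin] at hF
    set N := ‖(!₂[b, φ b] : EuclideanSpace ℝ (Fin 2)) - !₂[a, φ a]‖
    have hN0 : 0 ≤ N := norm_nonneg _
    have h1 : v 0 * (b - a) + v 1 * (φ b - φ a) ≤ 2 * δ / ρ * (|b - a| + (φ b - φ a)) := by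
      rw [div_mul_eq_mul_div, le_div_iff₀ hρ]
      nlinarith [mul_le_mul_of_nonneg_right hD hN0]
    have h2 : -|b - a| ≤ v 0 * (b - a) := by
      have h3 : |v 0 * (b - a)| ≤ 1 * |b - a| := by
        rw [abs_mul]; exact mul_le_mul_of_nonneg_right hv0 (abs_nonneg _)
      have := neg_abs_le (v 0 * (b - a))
      linarith
    have h3 := mul_le_mul_of_nonneg_right hv2 (sub_nonneg.2 hab)
    linarith
  have hc : 0 < η - 2 * δ / ρ := by
    rw [sub_pos, div_lt_iff₀ hρ]; linarith
  have hC : 0 ≤ (1 + 2 * δ / ρ) / (η - 2 * δ / ρ) := by positivity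
  refine ⟨⟨_, hC⟩, LipschitzOnWith.of_dist_le_mul fun a ha b hb => ?_⟩
  change dist (φ a) (φ b) ≤ (1 + 2 * δ / ρ) / (η - 2 * δ / ρ) * dist a b
  rw [div_mul_eq_mul_div, le_div_iff₀ hc, Real.dist_eq, Real.dist_eq]
  rcases le_total (φ a) (φ b) with h | h
  · have := one_side a ha b hb h
    rw [abs_sub_comm (φ a), abs_of_nonneg (sub_nonneg.2 h), abs_sub_comm a]
    linarith
  · have := one_side b hb a ha h
    rw [abs_of_nonneg (sub_nonneg.2 h)]
    linarith
end
end

section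
/- Let A ⊆ ℝ^d have reach A > ρ > 0, let W ⊆ ℝ^d be a k-dimensional subspace (1 ≤ k ≤ d−1) with V := W^⊥, let K > 0, let U ⊆ W be an open ball, and let φ : U → V be a K-Lipschitz map such that P := {w + φ(w) : w ∈ U} is a relatively open subset of A. Then φ is a C^{1,1} map and φ' : U → L(W, V) is Lipschitz with constant μ(2+K)³/ρ for some absolute constant μ. -/
open Metric Set Filter
open scoped ENNReal RealInnerProductSpace Topology NNReal

noncomputable section

variable {E : Type*} [NormedAddCommGroup E] [InnerProductSpace ℝ E]

lemma aux_unp {A : Set E} {ρ : ℝ} (hA : ENNReal.ofReal ρ < setReach A)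
    {a : E} (ha : a ∈ A) {x : E} (hx : dist x a ≤ ρ) : UnpPt A x := by
  have h1 : ENNReal.ofReal ρ < locReach A a := lt_of_lt_of_le hA (iInf₂_le a ha)
  unfold locReach at h1
  rw [lt_iSup_iff] at h1
  obtain ⟨s, hs⟩ := h1
  rw [lt_iSup_iff] at hs
  obtain ⟨hs1, hs2⟩ := hs
  apply hs1
  have h0 : 0 ≤ ρ := dist_nonneg.trans hx
  have : ρ < (s : ℝ) := by
    rw [ENNReal.ofReal_lt_coe_iff h0] at hs2
    exact hs2
  linarith

lemma aux_closed {A : Set E} {ρ : ℝ} (hρ : 0 < ρ)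
    (hU : ∀ a ∈ A, ∀ x : E, dist x a ≤ ρ → UnpPt A x) : IsClosed A := by
  rw [← closure_subset_iff_isClosed]
  intro q hq
  obtain ⟨a, ha, hd⟩ := Metric.mem_closure_iff.1 hq ρ hρ
  obtain ⟨p, ⟨hp, hpd⟩, -⟩ := hU a ha q hd.le
  rw [Metric.infDist_zero_of_mem_closure hq] at hpd
  rw [dist_eq_zero.1 hpd]; exact hp

lemma aux_slope [FiniteDimensional ℝ E] {A : Set E} (hc : IsClosed A) {y : E}
    (hy : UnpPt A y) (hpos : 0 < infDist y A) {α : ℝ} (hα : α < 1) {ε : ℝ} (hε : 0 < ε) :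
    ∃ z, z ≠ y ∧ dist z y < ε ∧ α * dist z y < infDist z A - infDist y A := by
  obtain ⟨p, ⟨hpA, hp⟩, huniq⟩ := hy
  have hne : A.Nonempty := ⟨p, hpA⟩
  have hex : ∀ z : E, ∃ q ∈ A, infDist z A = dist z q := fun z => hc.exists_infDist_eq_dist hne z
  choose π hπA hπ using hex
  set t : ℕ → ℝ := fun n => 1 / ((n : ℝ) + 1) with ht
  have ht0 : ∀ n, 0 < t n := fun n => by simp only [ht]; positivity
  have htl : Tendsto t atTop (𝓝 0) := tendsto_one_div_add_atTop_nhds_zero_nat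
  set z : ℕ → E := fun n => y + t n • (y - p) with hz
  have hzl : Tendsto z atTop (𝓝 y) := by
    have : Tendsto z atTop (𝓝 (y + (0:ℝ) • (y - p))) :=
      tendsto_const_nhds.add (htl.smul_const _)
    simpa using this
  have hdl : Tendsto (fun n => dist (z n) (π (z n))) atTop (𝓝 (infDist y A)) := by
    have := (Metric.continuous_infDist_pt A).continuousAt.tendsto.comp hzl
    refine this.congr (fun n => ?_)
    simp [hπ]
  have hb : Bornology.IsBounded (Set.range (fun n => π (z n))) := by
    obtain ⟨B1, hB1⟩ := (Metric.isBounded_range_of_tendsto _ hzl).exists_norm_le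
    obtain ⟨B2, hB2⟩ := (Metric.isBounded_range_of_tendsto _ hdl).exists_norm_le
    rw [isBounded_iff_forall_norm_le]
    refine ⟨B1 + B2, ?_⟩
    rintro _ ⟨n, rfl⟩
    have h1 := hB1 _ ⟨n, rfl⟩
    have h2 := hB2 _ ⟨n, rfl⟩
    simp only [dist_eq_norm, norm_norm] at h2
    have h3 := norm_sub_le (z n) (z n - π (z n))
    simp only [sub_sub_cancel] at h3
    linarith
  obtain ⟨q, -, ψ, hψ, hql⟩ := tendsto_subseq_of_bounded hb (fun n => Set.mem_range_self n)
  have hqA : q ∈ A := hc.mem_of_tendsto hql (Eventually.of_forall fun n => hπA _)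
  have hqd : dist y q = infDist y A :=
    tendsto_nhds_unique ((hzl.comp hψ.tendsto_atTop).dist hql) (hdl.comp hψ.tendsto_atTop)
  have hqp : q = p := huniq q ⟨hqA, hqd⟩
  subst hqp
  have hD : 0 < ‖y - q‖ := by rw [← dist_eq_norm, hqd]; exact hpos
  have hlim : Tendsto (fun n => ⟪y - q, y - π (z (ψ n))⟫ / ‖y - π (z (ψ n))‖) atTop
      (𝓝 (⟪y - q, y - q⟫ / ‖y - q‖)) := by
    have h1 : Tendsto (fun n => y - π (z (ψ n))) atTop (𝓝 (y - q)) :=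
      tendsto_const_nhds.sub hql
    exact (tendsto_const_nhds.inner h1).div h1.norm hD.ne'
  have hval : ⟪y - q, y - q⟫ / ‖y - q‖ = ‖y - q‖ := by
    rw [real_inner_self_eq_norm_sq]; field_simp
  rw [hval] at hlim
  have hlt : α * ‖y - q‖ < ‖y - q‖ := by nlinarith
  have e1 := hlim.eventually (lt_mem_nhds hlt)
  have e2 := (hzl.comp hψ.tendsto_atTop).eventually (Metric.ball_mem_nhds y hε)
  obtain ⟨n, h1, h2⟩ := (e1.and e2).exists
  set s := t (ψ n) with hs
  have hs0 : 0 < s := ht0 _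
  set q' := π (z (ψ n)) with hq'
  have hzy : z (ψ n) - y = s • (y - q) := by simp [hz, hs]
  have hdz : dist (z (ψ n)) y = s * ‖y - q‖ := by
    rw [dist_eq_norm, hzy, norm_smul, Real.norm_of_nonneg hs0.le]
  refine ⟨z (ψ n), ?_, h2, ?_⟩
  · intro h
    rw [h, dist_self] at hdz
    have := mul_pos hs0 hD
    linarith
  · have hq'd : infDist y A ≤ ‖y - q'‖ := by
      rw [← dist_eq_norm]; exact infDist_le_dist_of_mem (hπA _)
    have hq'0 : 0 < ‖y - q'‖ := lt_of_lt_of_le hpos hq'd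
    rw [hdz, hπ (z (ψ n)), dist_eq_norm]
    have hcs := real_inner_le_norm (z (ψ n) - q') (y - q')
    have hexp : ⟪z (ψ n) - q', y - q'⟫ = ‖y - q'‖ ^ 2 + s * ⟪y - q, y - q'⟫ := by
      have : z (ψ n) - q' = (y - q') + s • (y - q) := by rw [← hzy]; abel
      rw [this, inner_add_left, real_inner_self_eq_norm_sq, real_inner_smul_left]
    rw [hexp] at hcs
    rw [lt_div_iff₀ hq'0] at h1
    have h3 := mul_lt_mul_of_pos_left h1 hs0
    have h4 : (α * (s * ‖y - q‖)) * ‖y - q'‖ < (‖z (ψ n) - q'‖ - ‖y - q'‖) * ‖y - q'‖ := by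
      nlinarith
    have := lt_of_mul_lt_mul_right h4 hq'0.le
    linarith

lemma aux_federer [FiniteDimensional ℝ E] {A : Set E} {ρ : ℝ} (hc : IsClosed A)
    (hU : ∀ y, infDist y A < ρ → UnpPt A y) {x p : E} (hpA : p ∈ A)
    (hp : dist x p = infDist x A) (h0 : 0 < dist x p) (h1 : dist x p < ρ) {b : E} (hb : b ∈ A) :
    2 * ρ * ⟪x - p, b - p⟫ ≤ ‖x - p‖ * ‖b - p‖ ^ 2 := by
  have hne : A.Nonempty := ⟨p, hpA⟩
  set σ := ρ - dist x p with hσ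
  have hσ0 : 0 < σ := by linarith
  have key : ∀ α : ℝ, 0 < α → α < 1 → ∃ y ∈ sphere x σ, infDist x A + α * σ ≤ infDist y A := by
    intro α hα0 hα
    obtain ⟨y, hy, hmax⟩ := (isCompact_closedBall x σ).exists_isMaxOn
      (f := fun y => infDist y A - α * dist y x) ⟨x, by simp [hσ0.le]⟩
      (by
        apply Continuous.continuousOn
        have := Metric.continuous_infDist_pt A
        fun_prop)
    have hx := hmax (show x ∈ closedBall x σ by simp [hσ0.le])
    simp only [mem_ofPred_eq, dist_self, mul_zero, sub_zero] at hx
    rcases (mem_closedBall.1 hy).lt_or_eq with hlt | heq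
    · exfalso
      have hyd : infDist y A ≤ infDist x A + dist y x := infDist_le_infDist_add_dist
      have hyρ : infDist y A < ρ := by linarith
      have hypos : 0 < infDist y A := by
        have : 0 ≤ α * dist y x := by positivity
        linarith
      obtain ⟨z, hzy, hz1, hz2⟩ := aux_slope hc (hU y hyρ) hypos hα (sub_pos.2 hlt)
      have htri := dist_triangle z y x
      have hz := hmax (show z ∈ closedBall x σ by rw [mem_closedBall]; linarith)
      simp only [mem_ofPred_eq] at hz
      nlinarith
    · refine ⟨y, heq, ?_⟩
      rw [heq] at hx
      linarith
  obtain ⟨y0, hy0, -⟩ := key (1/2) (by norm_num) (by norm_num)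
  obtain ⟨y, hy, hmax⟩ := (isCompact_sphere x σ).exists_isMaxOn ⟨y0, hy0⟩
      (Metric.continuous_infDist_pt A).continuousOn
  have hyρ : ρ ≤ infDist y A := by
    by_contra hcon
    push Not at hcon
    set β := (ρ - infDist y A) / 2 with hβ
    have hβ0 : 0 < β := by linarith
    obtain ⟨α, hα0, hα1, hα2⟩ : ∃ α : ℝ, 0 < α ∧ α < 1 ∧ (1 - α) * σ < 2 * β := by
      refine ⟨max (1/2) (1 - β / σ), ?_, ?_, ?_⟩
      · exact lt_of_lt_of_le (by norm_num) (le_max_left _ _)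
      · have : 0 < β / σ := by positivity
        exact max_lt (by norm_num) (by linarith)
      · have h2 : 1 - max (1/2) (1 - β / σ) ≤ β / σ := by
          have := le_max_right (1/2) (1 - β / σ); linarith
        have h3 := mul_le_mul_of_nonneg_right h2 hσ0.le
        rw [div_mul_cancel₀ _ hσ0.ne'] at h3
        linarith
    obtain ⟨y', hy', hy'd⟩ := key α hα0 hα1
    have := hmax hy'
    simp only [mem_ofPred_eq] at this
    nlinarith
  rw [mem_sphere, dist_eq_norm] at hy
  rw [dist_eq_norm] at h0 h1 hσ
  have hyp : infDist y A ≤ ‖y - p‖ := by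
    rw [← dist_eq_norm]; exact infDist_le_dist_of_mem hpA
  have htri := norm_add_le (y - x) (x - p)
  rw [sub_add_sub_cancel] at htri
  have heq : ‖(y - x) + (x - p)‖ = ‖y - x‖ + ‖x - p‖ := by
    rw [sub_add_sub_cancel]; linarith
  have hray := (sameRay_iff_norm_add.2 heq).norm_smul_eq
  rw [hy] at hray
  have hypρ : ‖y - p‖ = ρ := by linarith
  have hvec : ‖x - p‖ • (y - p) = ρ • (x - p) := by
    have : y - p = (y - x) + (x - p) := by abel
    rw [this, smul_add, ← hray, ← add_smul]
    congr 1; linarith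
  have hyb : ρ ≤ ‖y - b‖ := by
    rw [← dist_eq_norm]; exact hyρ.trans (infDist_le_dist_of_mem hb)
  have hexp : ‖y - b‖ ^ 2 = ‖y - p‖ ^ 2 - 2 * ⟪y - p, b - p⟫ + ‖b - p‖ ^ 2 := by
    rw [← norm_sub_sq_real]; congr 2; abel
  have hin : ‖x - p‖ * ⟪y - p, b - p⟫ = ρ * ⟪x - p, b - p⟫ := by
    rw [← real_inner_smul_left, hvec, real_inner_smul_left]
  have hρ0 : 0 < ρ := h0.trans h1
  have hsq : ρ ^ 2 ≤ ‖y - b‖ ^ 2 := pow_le_pow_left₀ hρ0.le hyb 2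
  rw [hexp, hypρ] at hsq
  have : 2 * ⟪y - p, b - p⟫ ≤ ‖b - p‖ ^ 2 := by linarith
  nlinarith

lemma aux_normal [FiniteDimensional ℝ E] {A : Set E} {ρ : ℝ} (hρ : 0 < ρ) (hc : IsClosed A)
    (hU : ∀ y, infDist y A < ρ → UnpPt A y) {a u : E} (haA : a ∈ A)
    (hu : ∀ ε > 0, ∃ δ > 0, ∀ b ∈ A, ‖b - a‖ < δ → ⟪u, b - a⟫ ≤ ε * ‖b - a‖)
    {b : E} (hb : b ∈ A) :
    2 * ρ * ⟪u, b - a⟫ ≤ ‖u‖ * ‖b - a‖ ^ 2 := by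
  by_cases hu0 : u = 0
  · simp [hu0]
  have hun : 0 < ‖u‖ := norm_pos_iff.2 hu0
  have hex : ∀ t : ℝ, ∃ q ∈ A, infDist (a + t • u) A = dist (a + t • u) q :=
    fun z => hc.exists_infDist_eq_dist ⟨a, haA⟩ _
  choose p hpA hp using hex
  have hid : Tendsto (fun t : ℝ => t) (𝓝[>] 0) (𝓝 0) := tendsto_id.mono_left nhdsWithin_le_nhds
  have hle : ∀ t : ℝ, 0 < t → ‖a + t • u - p t‖ ≤ t * ‖u‖ := by
    intro t ht
    rw [← dist_eq_norm, ← hp]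
    refine (infDist_le_dist_of_mem haA).trans ?_
    rw [dist_eq_norm, add_sub_cancel_left, norm_smul, Real.norm_of_nonneg ht.le]
  have hquad : ∀ t : ℝ, 0 < t → ‖p t - a‖ ^ 2 ≤ 2 * t * ⟪u, p t - a⟫ := by
    intro t ht
    have h1 := pow_le_pow_left₀ (norm_nonneg _) (hle t ht) 2
    have h2 : a + t • u - p t = t • u - (p t - a) := by abel
    rw [h2, norm_sub_sq_real, norm_smul, Real.norm_of_nonneg ht.le, real_inner_smul_left] at h1
    linarith
  have hlin : ∀ t : ℝ, 0 < t → ‖p t - a‖ ≤ 2 * t * ‖u‖ := by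
    intro t ht
    have h1 := hle t ht
    have h3 := norm_sub_le (t • u) (a + t • u - p t)
    have h4 : t • u - (a + t • u - p t) = p t - a := by abel
    rw [h4, norm_smul, Real.norm_of_nonneg ht.le] at h3
    linarith
  have hpl0 : Tendsto (fun t => p t - a) (𝓝[>] 0) (𝓝 0) := by
    apply squeeze_zero_norm' (a := fun t => 2 * t * ‖u‖)
    · filter_upwards [self_mem_nhdsWithin] with t ht using hlin t ht
    · have := (hid.const_mul 2).mul_const ‖u‖
      simpa using this
  have hpl : Tendsto p (𝓝[>] 0) (𝓝 a) := by
    have := hpl0.add_const a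
    simpa using this
  have hel : Tendsto (fun t => t⁻¹ • (p t - a)) (𝓝[>] 0) (𝓝 0) := by
    rw [Metric.tendsto_nhds]
    intro ε hε
    obtain ⟨δ, hδ, hδ'⟩ := hu (ε / 4) (by positivity)
    have e1 := hpl0.eventually (Metric.ball_mem_nhds 0 hδ)
    filter_upwards [self_mem_nhdsWithin, e1] with t ht h1
    have ht0 : (0:ℝ) < t := ht
    rw [dist_zero_right] at h1
    have h2 := hδ' (p t) (hpA t) h1
    have h3 := hquad t ht0
    rw [dist_zero_right, norm_smul, norm_inv, Real.norm_of_nonneg ht0.le,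
      inv_mul_lt_iff₀ ht0]
    by_contra hcon
    push Not at hcon
    have h4 : 0 < ‖p t - a‖ := lt_of_lt_of_le (by positivity) hcon
    have h5 : ‖p t - a‖ ^ 2 ≤ 2 * t * (ε / 4 * ‖p t - a‖) :=
      h3.trans (mul_le_mul_of_nonneg_left h2 (by positivity))
    have h6 : ‖p t - a‖ ≤ 2 * t * (ε / 4) := by
      refine le_of_mul_le_mul_right ?_ h4
      nlinarith
    have : 0 < t * ε := by positivity
    linarith
  have hul : Tendsto (fun t => u - t⁻¹ • (p t - a)) (𝓝[>] 0) (𝓝 u) := by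
    have := hel.const_sub u
    simpa using this
  have hbl : Tendsto (fun t => b - p t) (𝓝[>] 0) (𝓝 (b - a)) := hpl.const_sub b
  have hfin : ∀ᶠ t in 𝓝[>] (0:ℝ), 2 * ρ * ⟪u - t⁻¹ • (p t - a), b - p t⟫ ≤
      ‖u - t⁻¹ • (p t - a)‖ * ‖b - p t‖ ^ 2 := by
    have e1 : ∀ᶠ t in 𝓝[>] (0:ℝ), t * ‖u‖ < ρ := by
      have := hid.mul_const ‖u‖
      rw [zero_mul] at this
      exact this.eventually (gt_mem_nhds hρ)
    have e2 : ∀ᶠ t in 𝓝[>] (0:ℝ), 0 < ‖u - t⁻¹ • (p t - a)‖ :=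
      hul.norm.eventually (lt_mem_nhds hun)
    filter_upwards [self_mem_nhdsWithin, e1, e2] with t ht h1 h2
    have ht0 : (0:ℝ) < t := ht
    have hx : a + t • u - p t = t • (u - t⁻¹ • (p t - a)) := by
      rw [smul_sub, smul_smul, mul_inv_cancel₀ ht0.ne', one_smul]; abel
    have hd : dist (a + t • u) (p t) = t * ‖u - t⁻¹ • (p t - a)‖ := by
      rw [dist_eq_norm, hx, norm_smul, Real.norm_of_nonneg ht0.le]
    have := aux_federer hc hU (hpA t) (hp t).symm (by rw [hd]; positivity)
      (by rw [dist_eq_norm]; exact (hle t ht0).trans_lt h1) hb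
    rw [hx, real_inner_smul_left, norm_smul, Real.norm_of_nonneg ht0.le] at this
    refine le_of_mul_le_mul_left ?_ ht0
    linarith
  exact le_of_tendsto_of_tendsto ((hul.inner hbl).const_mul (2 * ρ))
    (hul.norm.mul (hbl.norm.pow 2)) hfin

lemma aux_taylor [FiniteDimensional ℝ E] {A : Set E} {ρ K : ℝ} (hρ : 0 < ρ) (hK : 0 < K)
    (hc : IsClosed A) (hU : ∀ y, infDist y A < ρ → UnpPt A y)
    (W : Submodule ℝ E) (c : W) (r : ℝ) (φ : W → Wᗮ)
    (hφ : LipschitzOnWith (Real.toNNReal K) φ (ball c r))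
    {O : Set E} (hO : IsOpen O)
    (hP : {x : E | ∃ w ∈ ball c r, x = (w : E) + (φ w : E)} = A ∩ O)
    {w : W} (hw : w ∈ ball c r) {L : W →L[ℝ] Wᗮ} (hL : HasFDerivAt φ L w) :
    ‖L‖ ≤ K ∧ ∀ w' ∈ ball c r,
      ‖φ w' - φ w - L (w' - w)‖ ≤ (1 + K) ^ 3 / (2 * ρ) * ‖w' - w‖ ^ 2 := by
  have hLK : ‖L‖ ≤ K := by
    have := hL.le_of_lipschitzOn (isOpen_ball.mem_nhds hw) hφ
    rwa [Real.coe_toNNReal _ hK.le] at this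
  refine ⟨hLK, fun w' hw' => ?_⟩
  have hmem : ∀ v ∈ ball c r, ((v : E) + (φ v : E)) ∈ A ∩ O := by
    intro v hv
    rw [← hP]; exact ⟨v, hv, rfl⟩
  have hin : ∀ (s s' : W) (v v' : Wᗮ), ⟪(s : E) + v, (s' : E) + v'⟫ = ⟪s, s'⟫ + ⟪v, v'⟫ := by
    intro s s' v v'
    have h1 : ⟪(s : E), (v' : E)⟫ = 0 := v'.2 _ s.2
    have h2 : ⟪(v : E), (s' : E)⟫ = 0 := by rw [real_inner_comm]; exact v.2 _ s'.2
    rw [inner_add_left, inner_add_right, inner_add_right, h1, h2]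
    simp [Submodule.coe_inner]
  have hdiff : ∀ v : W, ((v : E) + (φ v : E)) - ((w : E) + (φ w : E))
      = ((v - w : W) : E) + ((φ v - φ w : Wᗮ) : E) := by
    intro v; push_cast; abel
  have hnW : ∀ (s : W) (v : Wᗮ), ‖s‖ ≤ ‖(s : E) + v‖ := by
    intro s v
    have h := hin s s v v
    rw [real_inner_self_eq_norm_sq, real_inner_self_eq_norm_sq, real_inner_self_eq_norm_sq] at h
    apply le_of_sq_le_sq _ (norm_nonneg _)
    nlinarith [sq_nonneg ‖v‖]
  set a : E := (w : E) + (φ w : E) with ha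
  have haA := hmem w hw
  set e : Wᗮ := φ w' - φ w - L (w' - w) with he
  set u : E := ((-(ContinuousLinearMap.adjoint L e) : W) : E) + (e : E) with hu
  have huin : ∀ v : W, ⟪u, ((v : E) + (φ v : E)) - a⟫ = ⟪e, φ v - φ w - L (v - w)⟫ := by
    intro v
    rw [hdiff, hu, hin, inner_neg_left, ContinuousLinearMap.adjoint_inner_left,
      inner_sub_right e (φ v - φ w)]
    ring
  have hn := aux_normal hρ hc hU (u := u) haA.1 (b := (w' : E) + (φ w' : E)) ?_ (hmem w' hw').1
  · rw [huin, ← he, real_inner_self_eq_norm_sq] at hn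
    have hun : ‖u‖ ≤ (1 + K) * ‖e‖ := by
      have h1 : ‖u‖ ≤ ‖ContinuousLinearMap.adjoint L e‖ + ‖e‖ := by
        refine (norm_add_le _ _).trans ?_
        simp
      have h2 : ‖ContinuousLinearMap.adjoint L e‖ ≤ K * ‖e‖ := by
        refine (ContinuousLinearMap.le_opNorm _ _).trans ?_
        rw [LinearIsometryEquiv.norm_map]
        gcongr
      linarith
    have hbn : ‖(w' : E) + (φ w' : E) - a‖ ≤ (1 + K) * ‖w' - w‖ := by
      rw [hdiff]
      refine (norm_add_le _ _).trans ?_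
      have := hφ.dist_le_mul w' hw' w hw
      rw [Real.coe_toNNReal _ hK.le, dist_eq_norm, dist_eq_norm] at this
      simp only [Submodule.coe_norm] at this ⊢
      linarith
    rcases (norm_nonneg e).eq_or_lt with h0 | h0
    · rw [← h0]; positivity
    have h3 : 2 * ρ * ‖e‖ ^ 2 ≤ ((1 + K) * ‖e‖) * ((1 + K) * ‖w' - w‖) ^ 2 := by
      refine hn.trans ?_
      gcongr
    rw [div_mul_eq_mul_div, le_div_iff₀ (by positivity)]
    refine le_of_mul_le_mul_right ?_ h0
    linarith
  · intro ε hε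
    have hlo := hL.isLittleO
    have h1 := Asymptotics.isLittleO_iff.1 hlo (c := ε / (‖e‖ + 1)) (by positivity)
    obtain ⟨δ1, hδ1, hδ1'⟩ := Metric.eventually_nhds_iff.1 h1
    obtain ⟨δ2, hδ2, hδ2'⟩ := Metric.isOpen_iff.1 hO a haA.2
    refine ⟨min δ1 δ2, lt_min hδ1 hδ2, fun b hb hba => ?_⟩
    have hbO : b ∈ A ∩ O := ⟨hb, hδ2' (by
      rw [mem_ball, dist_eq_norm]; exact hba.trans_le (min_le_right _ _))⟩
    rw [← hP] at hbO
    obtain ⟨v, hv, rfl⟩ := hbO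
    rw [huin]
    have hvw : ‖v - w‖ ≤ ‖(v : E) + (φ v : E) - a‖ := by
      rw [hdiff]; exact hnW _ _
    have h2 := hδ1' (y := v) (by
      rw [dist_eq_norm]; exact hvw.trans_lt (hba.trans_le (min_le_left _ _)))
    calc ⟪e, φ v - φ w - L (v - w)⟫ ≤ ‖e‖ * ‖φ v - φ w - L (v - w)‖ := real_inner_le_norm _ _
      _ ≤ (‖e‖ + 1) * (ε / (‖e‖ + 1) * ‖v - w‖) := by gcongr; linarith
      _ = ε * ‖v - w‖ := by field_simp
      _ ≤ _ := by gcongr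

lemma aux_diff {X Y : Type*} [NormedAddCommGroup X] [NormedSpace ℝ X] [FiniteDimensional ℝ X]
    [NormedAddCommGroup Y] [NormedSpace ℝ Y] [FiniteDimensional ℝ Y]
    (c : X) (r K M : ℝ) (φ : X → Y)
    (hφ : LipschitzOnWith (Real.toNNReal K) φ (ball c r))
    (hT : ∀ w ∈ ball c r, ∀ L : X →L[ℝ] Y, HasFDerivAt φ L w → ‖L‖ ≤ K ∧ ∀ w' ∈ ball c r,
      ‖φ w' - φ w - L (w' - w)‖ ≤ M * ‖w' - w‖ ^ 2) {w : X} (hw : w ∈ ball c r) :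
    ∃ L : X →L[ℝ] Y, HasFDerivAt φ L w := by
  let _ : MeasurableSpace X := borel X
  have : BorelSpace X := ⟨rfl⟩
  have hae := hφ.ae_differentiableWithinAt (μ := MeasureTheory.Measure.addHaar) measurableSet_ball
  rw [MeasureTheory.ae_restrict_iff' measurableSet_ball] at hae
  have hdense := MeasureTheory.Measure.dense_of_ae hae
  obtain ⟨x, hx, hxl⟩ := mem_closure_iff_seq_limit.1 (hdense w)
  have hev : ∀ᶠ n in atTop, x n ∈ ball c r := hxl.eventually (isOpen_ball.mem_nhds hw)
  obtain ⟨N, hN⟩ := eventually_atTop.1 hev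
  have hder : ∀ n, ∃ L : X →L[ℝ] Y, HasFDerivAt φ L (x (n + N)) := by
    intro n
    have hm := hN (n + N) (by omega)
    exact ⟨_, ((hx (n + N) hm).differentiableAt (isOpen_ball.mem_nhds hm)).hasFDerivAt⟩
  choose L hL using hder
  have hxN : Tendsto (fun n => x (n + N)) atTop (𝓝 w) := hxl.comp (tendsto_add_atTop_nat N)
  have hTn := fun n => hT _ (hN (n + N) (by omega)) (L n) (hL n)
  obtain ⟨L0, -, ψ, hψ, hLl⟩ := tendsto_subseq_of_bounded (x := L)
    (s := closedBall 0 K) isBounded_closedBall (fun n => by simpa using (hTn n).1)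
  refine ⟨L0, ?_⟩
  have hyl := hxN.comp hψ.tendsto_atTop
  have hcont : ContinuousAt φ w := hφ.continuousOn.continuousAt (isOpen_ball.mem_nhds hw)
  have hbound : ∀ w' ∈ ball c r, ‖φ w' - φ w - L0 (w' - w)‖ ≤ M * ‖w' - w‖ ^ 2 := by
    intro w' hw'
    have hd : Tendsto (fun n => w' - x (ψ n + N)) atTop (𝓝 (w' - w)) := hyl.const_sub w'
    have hφl : Tendsto (fun n => φ (x (ψ n + N))) atTop (𝓝 (φ w)) := hcont.tendsto.comp hyl
    have happ : Tendsto (fun n => L (ψ n) (w' - x (ψ n + N))) atTop (𝓝 (L0 (w' - w))) :=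
      (isBoundedBilinearMap_apply (𝕜 := ℝ) (E := X) (F := Y)).continuous.tendsto (L0, w' - w)
        |>.comp (hLl.prodMk_nhds hd)
    exact le_of_tendsto_of_tendsto' ((hφl.const_sub (φ w')).sub happ).norm
      ((hd.norm.pow 2).const_mul M) (fun n => (hTn (ψ n)).2 w' hw')
  rw [hasFDerivAt_iff_isLittleO]
  have hO : (fun w' => φ w' - φ w - L0 (w' - w)) =O[𝓝 w] fun w' => ‖w' - w‖ ^ 2 := by
    apply Asymptotics.IsBigO.of_bound M
    filter_upwards [isOpen_ball.mem_nhds hw] with w' hw'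
    simpa using hbound w' hw'
  refine hO.trans_isLittleO ?_
  have h2 : (fun w' : X => ‖w' - w‖ ^ 2) =o[𝓝 w] fun w' => w' - w := by
    have := (Asymptotics.isLittleO_norm_pow_id (E' := X) one_lt_two)
    have hs : Tendsto (fun w' : X => w' - w) (𝓝 w) (𝓝 0) := by
      have : Tendsto (fun w' : X => w' - w) (𝓝 w) (𝓝 (w - w)) :=
        tendsto_id.sub_const w
      simpa using this
    exact this.comp_tendsto hs
  exact h2

lemma aux_lip {X Y : Type*} [NormedAddCommGroup X] [NormedSpace ℝ X]
    [NormedAddCommGroup Y] [NormedSpace ℝ Y]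
    (c : X) (r M : ℝ) (hM : 0 ≤ M) (φ : X → Y) {w w' : X} (hw : w ∈ ball c r)
    (hw' : w' ∈ ball c r) (L L' : X →L[ℝ] Y)
    (h : ∀ z ∈ ball c r, ‖φ z - φ w - L (z - w)‖ ≤ M * ‖z - w‖ ^ 2)
    (h' : ∀ z ∈ ball c r, ‖φ z - φ w' - L' (z - w')‖ ≤ M * ‖z - w'‖ ^ 2) :
    ‖L - L'‖ ≤ 20 * M * ‖w - w'‖ := by
  rw [mem_ball, dist_eq_norm] at hw hw'
  have hr : 0 < r := (norm_nonneg _).trans_lt hw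
  set δ := ‖w - w'‖ with hδ
  have hδr : δ < 2 * r := by
    have h1 := norm_sub_le (w - c) (w' - c)
    rw [sub_sub_sub_cancel_right] at h1
    linarith
  rcases (norm_nonneg (w - w')).eq_or_lt with h0 | h0
  · have hww : w = w' := by rw [← sub_eq_zero, ← norm_eq_zero]; exact h0.symm
    subst hww
    have h1 : ∀ {P : X →L[ℝ] Y}, (∀ z ∈ ball c r, ‖φ z - φ w - P (z - w)‖ ≤ M * ‖z - w‖ ^ 2) →
        HasFDerivAt φ P w := by
      intro P hPz
      rw [hasFDerivAt_iff_isLittleO]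
      have hO : (fun z => φ z - φ w - P (z - w)) =O[𝓝 w] fun z => ‖z - w‖ ^ 2 := by
        apply Asymptotics.IsBigO.of_bound M
        filter_upwards [isOpen_ball.mem_nhds (show w ∈ ball c r by
          rw [mem_ball, dist_eq_norm]; exact hw)] with z hz
        simpa using hPz z hz
      refine hO.trans_isLittleO ?_
      have := (Asymptotics.isLittleO_norm_pow_id (E' := X) one_lt_two)
      have hs : Tendsto (fun w' : X => w' - w) (𝓝 w) (𝓝 0) := by
        have : Tendsto (fun w' : X => w' - w) (𝓝 w) (𝓝 (w - w)) :=
          tendsto_id.sub_const w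
        simpa using this
      exact this.comp_tendsto hs
    have : L = L' := (h1 h).unique (h1 h')
    rw [this, sub_self, norm_zero]
    positivity
  have hδ0 : 0 < δ := h0
  set τ := δ / (2 * r) with hτ
  have hτ0 : 0 < τ := by positivity
  have hτ1 : τ < 1 := by rw [hτ, div_lt_one (by positivity)]; exact hδr
  have hτr : τ * r = δ / 2 := by rw [hτ]; field_simp
  set m : X := w - τ • (w - c) with hm
  have hmc : ‖m - c‖ ≤ r - δ / 2 := by
    have : m - c = (1 - τ) • (w - c) := by rw [hm, sub_smul, one_smul]; abel
    rw [this, norm_smul, Real.norm_of_nonneg (by linarith)]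
    nlinarith
  have hmw : ‖m - w‖ ≤ δ / 2 := by
    have : m - w = -(τ • (w - c)) := by rw [hm]; abel
    rw [this, norm_neg, norm_smul, Real.norm_of_nonneg hτ0.le]
    nlinarith
  have hz : ∀ v : X, ‖v‖ < δ / 2 → m + v ∈ ball c r ∧ ‖m + v - w‖ ≤ δ ∧ ‖m + v - w'‖ ≤ 2 * δ := by
    intro v hv
    have e1 : m + v - c = (m - c) + v := by abel
    have e2 : m + v - w = (m - w) + v := by abel
    have e3 : m + v - w' = (m - w) + v + (w - w') := by abel
    have t1 := norm_add_le (m - c) v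
    have t2 := norm_add_le (m - w) v
    have t3 := norm_add_le ((m - w) + v) (w - w')
    refine ⟨?_, ?_, ?_⟩
    · rw [mem_ball, dist_eq_norm, e1]; linarith
    · rw [e2]; linarith
    · rw [e3]; linarith
  have hsmall : ∀ v : X, ‖v‖ = δ / 4 → ‖(L - L') v‖ ≤ 20 * M * δ * ‖v‖ := by
    intro v hv
    obtain ⟨a1, a2, a3⟩ := hz v (by linarith)
    obtain ⟨b1, b2, b3⟩ := hz (-v) (by rw [norm_neg]; linarith)
    have c1 := (h _ a1).trans (mul_le_mul_of_nonneg_left (pow_le_pow_left₀ (norm_nonneg _) a2 2) hM)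
    have c2 := (h _ b1).trans (mul_le_mul_of_nonneg_left (pow_le_pow_left₀ (norm_nonneg _) b2 2) hM)
    have c3 := (h' _ a1).trans (mul_le_mul_of_nonneg_left (pow_le_pow_left₀ (norm_nonneg _) a3 2) hM)
    have c4 := (h' _ b1).trans (mul_le_mul_of_nonneg_left (pow_le_pow_left₀ (norm_nonneg _) b3 2) hM)
    have hid : (2:ℝ) • ((L - L') v) =
        ((φ (m + v) - φ w' - L' (m + v - w')) - (φ (m + -v) - φ w' - L' (m + -v - w')))
        - ((φ (m + v) - φ w - L (m + v - w)) - (φ (m + -v) - φ w - L (m + -v - w))) := by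
      simp only [map_sub, map_add, map_neg, ContinuousLinearMap.sub_apply, two_smul]
      abel
    have hn : 2 * ‖(L - L') v‖ ≤ 10 * M * δ ^ 2 := by
      have : ‖(2:ℝ) • ((L - L') v)‖ = 2 * ‖(L - L') v‖ := by rw [norm_smul]; norm_num
      rw [← this, hid]
      refine (norm_sub_le _ _).trans ?_
      refine (add_le_add (norm_sub_le _ _) (norm_sub_le _ _)).trans ?_
      linarith
    rw [hv]; nlinarith
  refine ContinuousLinearMap.opNorm_le_bound _ (by positivity) (fun v => ?_)
  by_cases hv0 : v = 0
  · simp [hv0]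
  have hvn : 0 < ‖v‖ := norm_pos_iff.2 hv0
  set s := δ / 4 / ‖v‖ with hs
  have hs0 : 0 < s := by positivity
  have := hsmall (s • v) (by
    rw [norm_smul, Real.norm_of_nonneg hs0.le, hs]; field_simp)
  rw [map_smul, norm_smul, norm_smul, Real.norm_of_nonneg hs0.le] at this
  refine le_of_mul_le_mul_left ?_ hs0
  linarith

/-- A Lipschitz graph which is relatively open in a set of reach > ρ is C^{1,1}, with
derivative Lipschitz of constant μ(2+K)³/ρ for an absolute constant μ. -/
theorem stmt13 : ∃ μ : ℝ, 0 < μ ∧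
    ∀ (d k : ℕ) (A : Set (EuclideanSpace ℝ (Fin d))) (ρ K : ℝ)
      (W : Submodule ℝ (EuclideanSpace ℝ (Fin d))) (c : W) (r : ℝ)
      (φ : W → (Wᗮ : Submodule ℝ (EuclideanSpace ℝ (Fin d)))),
      0 < ρ → ENNReal.ofReal ρ < setReach A →
      1 ≤ k → k ≤ d - 1 → Module.finrank ℝ W = k → 0 < K →
      LipschitzOnWith (Real.toNNReal K) φ (ball c r) →
      (∃ O : Set (EuclideanSpace ℝ (Fin d)), IsOpen O ∧
        {x : EuclideanSpace ℝ (Fin d) | ∃ w ∈ ball c r,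
          x = (w : EuclideanSpace ℝ (Fin d)) + (φ w : EuclideanSpace ℝ (Fin d))}
          = A ∩ O) →
      ∃ g : W → (W →L[ℝ] (Wᗮ : Submodule ℝ (EuclideanSpace ℝ (Fin d)))),
        (∀ w ∈ ball c r, HasFDerivAt φ (g w) w) ∧
        ∀ w ∈ ball c r, ∀ w' ∈ ball c r,
          ‖g w - g w'‖ ≤ μ * (2 + K) ^ 3 / ρ * ‖w - w'‖ := by
  refine ⟨10, by norm_num, ?_⟩
  intro d k A ρ K W c r φ hρ hA _ _ _ hK hφ hO
  obtain ⟨O, hO, hP⟩ := hO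
  rcases le_or_gt r 0 with hr | hr
  · refine ⟨fun _ => 0, ?_, ?_⟩
    · intro w hw; rw [ball_eq_empty.2 hr] at hw; exact hw.elim
    · intro w hw; rw [ball_eq_empty.2 hr] at hw; exact hw.elim
  have hUa : ∀ a ∈ A, ∀ x, dist x a ≤ ρ → UnpPt A x := fun a ha x hx => aux_unp hA ha hx
  have hc : IsClosed A := aux_closed hρ hUa
  have hne : A.Nonempty := by
    have : ((c : EuclideanSpace ℝ (Fin d)) + (φ c : EuclideanSpace ℝ (Fin d))) ∈ A ∩ O := by
      rw [← hP]; exact ⟨c, mem_ball_self hr, rfl⟩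
    exact ⟨_, this.1⟩
  have hU : ∀ y, infDist y A < ρ → UnpPt A y := by
    intro y hy
    obtain ⟨a, ha, hd⟩ := (infDist_lt_iff hne).1 hy
    exact hUa a ha y hd.le
  have hT : ∀ w ∈ ball c r, ∀ L : W →L[ℝ] (Wᗮ : Submodule ℝ (EuclideanSpace ℝ (Fin d))),
      HasFDerivAt φ L w → ‖L‖ ≤ K ∧ ∀ w' ∈ ball c r,
      ‖φ w' - φ w - L (w' - w)‖ ≤ (1 + K) ^ 3 / (2 * ρ) * ‖w' - w‖ ^ 2 :=
    fun w hw L hL => aux_taylor hρ hK hc hU W c r φ hφ hO hP hw hL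
  have hg : ∀ w ∈ ball c r, HasFDerivAt φ (fderiv ℝ φ w) w := by
    intro w hw
    obtain ⟨L, hL⟩ := aux_diff c r K _ φ hφ hT hw
    exact hL.differentiableAt.hasFDerivAt
  refine ⟨fderiv ℝ φ, hg, fun w hw w' hw' => ?_⟩
  refine (aux_lip c r ((1 + K) ^ 3 / (2 * ρ)) (by positivity) φ hw hw' _ _
    (hT w hw _ (hg w hw)).2 (hT w' hw' _ (hg w' hw')).2).trans ?_
  have h1 : 20 * ((1 + K) ^ 3 / (2 * ρ)) = 10 * (1 + K) ^ 3 / ρ := by field_simp; norm_num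
  rw [h1]
  gcongr
  norm_num
end
end

section
/- Let A ⊆ ℝ^d be a set with positive reach, 0 < k < d, and assume every point of A has a relatively open neighbourhood in A that is the graph of a K-Lipschitz map from an open ball in a k-dimensional subspace W to W^⊥. Then A is a k-dimensional C^{1,1} manifold. -/
open Metric Set Filter
open scoped ENNReal RealInnerProductSpace Topology NNReal

noncomputable section

variable {E : Type*} [NormedAddCommGroup E] [InnerProductSpace ℝ E]

theorem aux_reach_s14 {A : Set E} (hA : A.Nonempty) (h : 0 < setReach A) :
    ∃ R : ℝ, 0 < R ∧ ∀ x : E, infDist x A < R → UnpPt A x := by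
  obtain ⟨ρ, h0, h1⟩ := ENNReal.lt_iff_exists_nnreal_btwn.1 h
  refine ⟨ρ, by exact_mod_cast h0, fun x hx => ?_⟩
  obtain ⟨a, ha, hxa⟩ := (infDist_lt_iff hA).1 hx
  have h2 : (ρ : ℝ≥0∞) < locReach A a := lt_of_lt_of_le h1 (iInf₂_le a ha)
  unfold locReach at h2
  obtain ⟨r, h3⟩ := lt_iSup_iff.1 h2
  obtain ⟨h4, h5⟩ := lt_iSup_iff.1 h3
  have h6 : ρ < r := by exact_mod_cast h5
  exact h4 x (hxa.trans (by exact_mod_cast h6))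

theorem aux_closed_s14 {A : Set E} (hA : A.Nonempty) {R : ℝ} (hR : 0 < R)
    (hU : ∀ x : E, infDist x A < R → UnpPt A x) : IsClosed A := by
  refine isClosed_of_closure_subset fun x hx => ?_
  have h0 : infDist x A = 0 := (mem_closure_iff_infDist_zero hA).1 hx
  obtain ⟨a, ⟨ha, hd⟩, -⟩ := hU x (by rw [h0]; exact hR)
  rw [h0, dist_eq_zero] at hd
  exact hd ▸ ha

theorem aux_cont [ProperSpace E] {A : Set E} (hc : IsClosed A) {y q : E}
    (huniq : ∀ q' ∈ A, dist y q' = infDist y A → q' = q) {θ : ℝ} (hθ : 0 < θ) :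
    ∃ t0 > 0, ∀ z, dist z y < t0 → ∀ q' ∈ A, dist z q' = infDist z A → dist q' q < θ := by
  have hS : IsCompact ((A ∩ closedBall y (infDist y A + 2)) \ ball q θ) :=
    (((isCompact_closedBall y (infDist y A + 2)).inter_left hc)).diff isOpen_ball
  have key : ∀ t z, dist z y < t → t ≤ 1 → ∀ q' ∈ A, dist z q' = infDist z A → ¬ dist q' q < θ →
      q' ∈ ((A ∩ closedBall y (infDist y A + 2)) \ ball q θ) ∧ dist y q' < infDist y A + 2 * t := by
    intro t z hz ht q' hq' hd hn
    have h1 : infDist z A ≤ infDist y A + dist z y := infDist_le_infDist_add_dist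
    have h2 : dist y q' ≤ dist y z + dist z q' := dist_triangle _ _ _
    rw [dist_comm y z] at h2
    refine ⟨⟨⟨hq', ?_⟩, hn⟩, by linarith⟩
    rw [mem_closedBall, dist_comm]; linarith
  rcases ((A ∩ closedBall y (infDist y A + 2)) \ ball q θ).eq_empty_or_nonempty with he | hne
  · refine ⟨1, one_pos, fun z hz q' hq' hd => ?_⟩
    by_contra hn
    have := (key 1 z hz le_rfl q' hq' hd hn).1
    rw [he] at this
    exact this
  · obtain ⟨s, hs, hmin⟩ := hS.exists_isMinOn hne
      (continuous_const.dist continuous_id : Continuous fun p => dist y p).continuousOn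
    have h1 : infDist y A < dist y s := by
      refine lt_of_le_of_ne (infDist_le_dist_of_mem hs.1.1) fun h => ?_
      have := huniq s hs.1.1 h.symm
      exact hs.2 (by rw [this]; exact mem_ball_self hθ)
    refine ⟨min 1 ((dist y s - infDist y A) / 2), by
      apply lt_min one_pos; linarith, fun z hz q' hq' hd => ?_⟩
    by_contra hn
    obtain ⟨h2, h3⟩ := key _ z hz (min_le_left _ _) q' hq' hd hn
    have h4 : dist y s ≤ dist y q' := hmin h2
    have h5 := min_le_right 1 ((dist y s - infDist y A) / 2)
    linarith

theorem aux_slope_s14 [ProperSpace E] {A : Set E} (hA : A.Nonempty) {R : ℝ} (hR : 0 < R)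
    (hU : ∀ x : E, infDist x A < R → UnpPt A x) {y : E} (hy0 : 0 < infDist y A)
    (hyR : infDist y A < R) {η : ℝ} (hη : 0 < η) (hη1 : η < 1) :
    ∃ v : E, ‖v‖ = 1 ∧ ∃ t0 > 0, ∀ t, 0 < t → t < t0 →
      infDist y A + (1 - η) * t ≤ infDist (y + t • v) A := by
  have hc := aux_closed_s14 hA hR hU
  obtain ⟨q, ⟨hq, hdq⟩, hu⟩ := hU y hyR
  set δ := infDist y A with hδ
  obtain ⟨t1, ht1, hcont⟩ := aux_cont hc (y := y) (q := q)
    (fun q' h1 h2 => hu q' ⟨h1, h2⟩) (mul_pos hη hy0)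
  have hn : ‖y - q‖ = δ := by rw [← dist_eq_norm]; exact hdq
  have hv : ‖(δ⁻¹ • (y - q))‖ = 1 := by
    rw [norm_smul, hn, norm_inv, Real.norm_of_nonneg hy0.le, inv_mul_cancel₀ hy0.ne']
  refine ⟨δ⁻¹ • (y - q), hv, min t1 (R - δ), lt_min ht1 (by linarith), fun t ht htt => ?_⟩
  set v := δ⁻¹ • (y - q) with hvdef
  have hzy : dist (y + t • v) y = t := by
    rw [dist_eq_norm, add_sub_cancel_left, norm_smul, hv, Real.norm_of_nonneg ht.le, mul_one]
  have h1 : infDist (y + t • v) A ≤ δ + dist (y + t • v) y := infDist_le_infDist_add_dist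
  have m1 := min_le_left t1 (R - δ)
  have m2 := min_le_right t1 (R - δ)
  obtain ⟨p, ⟨hp, hdp⟩, -⟩ := hU (y + t • v) (by linarith)
  have h2 := hcont (y + t • v) (by linarith) p hp hdp
  rw [← hdp]
  have h3 : δ ≤ ‖y - p‖ := by rw [← dist_eq_norm]; exact infDist_le_dist_of_mem hp
  have h4 : dist (y + t • v) p ^ 2 = ‖y - p‖ ^ 2 + 2 * t * ⟪v, y - p⟫ + t ^ 2 := by
    rw [dist_eq_norm, show y + t • v - p = (y - p) + t • v by abel, norm_add_sq_real,
      inner_smul_right, norm_smul, hv, real_inner_comm]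
    simp; ring
  have h5 : ⟪v, y - q⟫ = δ := by
    rw [hvdef, inner_smul_left, real_inner_self_eq_norm_sq, hn]
    simp; field_simp
  have h6 : ⟪v, y - p⟫ = δ - ⟪v, p - q⟫ := by
    rw [← h5, ← inner_sub_right]; congr 1; abel
  have h7 : ⟪v, p - q⟫ ≤ η * δ := by
    have := real_inner_le_norm v (p - q)
    rw [hv, ← dist_eq_norm] at this; linarith
  have h8 : δ * (1 - η) ≤ ⟪v, y - p⟫ := by rw [h6]; linarith
  refine abs_le_of_sq_le_sq' ?_ dist_nonneg |>.2
  rw [h4]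
  have h9 : t * (δ * (1 - η)) ≤ t * ⟪v, y - p⟫ := mul_le_mul_of_nonneg_left h8 ht.le
  have h10 : δ ^ 2 ≤ ‖y - p‖ ^ 2 := by gcongr
  have h11 : ((1 - η) * t) ^ 2 ≤ t ^ 2 := by
    have : (1 - η) * t ≤ t := by nlinarith
    have : 0 ≤ (1 - η) * t := by apply mul_nonneg <;> linarith
    gcongr
  nlinarith

theorem aux_grow [ProperSpace E] {A : Set E} (hA : A.Nonempty) {R : ℝ} (hR : 0 < R)
    (hU : ∀ x : E, infDist x A < R → UnpPt A x) {x : E} (hx0 : 0 < infDist x A)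
    {ε : ℝ} (hε : 0 < ε) (hxR : infDist x A + ε < R) :
    ∃ y, dist y x ≤ ε ∧ infDist x A + ε ≤ infDist y A := by
  have hcd : Continuous fun z : E => infDist z A := continuous_infDist_pt A
  have hK : IsCompact (closedBall x ε) := isCompact_closedBall x ε
  have hKne : (closedBall x ε).Nonempty := ⟨x, mem_closedBall_self hε.le⟩
  obtain ⟨y, hy, hmax⟩ := hK.exists_isMaxOn hKne hcd.continuousOn
  refine ⟨y, hy, ?_⟩
  have main : ∀ η, 0 < η → η < 1 → infDist x A + (1 - η) * ε ≤ infDist y A := by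
    intro η h0 h1
    have hcc : Continuous fun z : E => infDist z A - (1 - η) * dist z x := by fun_prop
    obtain ⟨z, hz, hzmax⟩ := hK.exists_isMaxOn hKne hcc.continuousOn
    have hx1 : infDist x A - (1 - η) * dist x x ≤ infDist z A - (1 - η) * dist z x :=
      hzmax (mem_closedBall_self hε.le)
    rw [dist_self, mul_zero, sub_zero] at hx1
    have hzx : dist z x ≤ ε := hz
    have hpos : 0 ≤ (1 - η) * dist z x := mul_nonneg (by linarith) dist_nonneg
    have hzy : infDist z A ≤ infDist y A := hmax hz
    rcases hzx.lt_or_eq with hlt | heq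
    · exfalso
      have hzl : infDist z A ≤ infDist x A + dist z x := infDist_le_infDist_add_dist
      obtain ⟨v, hv, t0, ht0, hsl⟩ := aux_slope_s14 hA hR hU (y := z) (by linarith) (by linarith)
        (η := η / 2) (by linarith) (by linarith)
      set t := min t0 (ε - dist z x) / 2 with ht
      have htp : 0 < min t0 (ε - dist z x) := lt_min ht0 (by linarith)
      have m1 := min_le_left t0 (ε - dist z x)
      have m2 := min_le_right t0 (ε - dist z x)
      have h2 := hsl t (by linarith) (by linarith)
      have h3 : dist (z + t • v) x ≤ t + dist z x := by
        refine (dist_triangle _ z _).trans ?_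
        rw [dist_eq_norm (z + t • v), add_sub_cancel_left, norm_smul, hv,
          Real.norm_of_nonneg (by linarith), mul_one]
      have h4 : infDist (z + t • v) A - (1 - η) * dist (z + t • v) x
          ≤ infDist z A - (1 - η) * dist z x :=
        hzmax (show z + t • v ∈ closedBall x ε by rw [mem_closedBall]; linarith)
      have h5 := mul_le_mul_of_nonneg_left h3 (by linarith : 0 ≤ 1 - η)
      have h6 : 0 < η * t := mul_pos h0 (by linarith)
      nlinarith
    · rw [heq] at hx1; linarith
  by_contra hlt
  push Not at hlt
  have hgap : 0 < (infDist x A + ε - infDist y A) / ε := div_pos (by linarith) hε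
  set η := min (1 / 2) ((infDist x A + ε - infDist y A) / ε / 2) with hη
  have h1 := main η (lt_min (by norm_num) (by linarith))
    ((min_le_left _ _).trans_lt (by norm_num))
  have h2 : η * ε ≤ (infDist x A + ε - infDist y A) / ε / 2 * ε :=
    mul_le_mul_of_nonneg_right (min_le_right _ _) hε.le
  have h3 : (infDist x A + ε - infDist y A) / ε / 2 * ε = (infDist x A + ε - infDist y A) / 2 := by
    field_simp
  nlinarith

/-- Federer's normal inequality. -/
theorem aux_normal_s14 [ProperSpace E] {A : Set E} (hA : A.Nonempty) {R : ℝ} (hR : 0 < R)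
    (hU : ∀ x : E, infDist x A < R → UnpPt A x) {x p : E} 
    {s : ℝ} (hs : s < R) (hxs : infDist x A < s) (hp : p ∈ A) (hxp : dist x p = infDist x A)
    {b : E} (hb : b ∈ A) :
    2 * s * ⟪x - p, b - p⟫ ≤ ‖x - p‖ * ‖b - p‖ ^ 2 := by
  rcases (infDist_nonneg (x := x) (s := A)).eq_or_lt with h0 | h0
  · rw [← h0, dist_eq_zero] at hxp
    simp [hxp]
  obtain ⟨y, hy1, hy2⟩ := aux_grow hA hR hU h0 (ε := s - infDist x A) (by linarith) (by linarith)
  set δ := infDist x A with hδ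
  have hn : ‖x - p‖ = δ := by rw [← dist_eq_norm]; exact hxp
  have hyp : s ≤ ‖y - p‖ := by
    rw [← dist_eq_norm]; have := infDist_le_dist_of_mem (x := y) hp; linarith
  have hyx : ‖y - x‖ ≤ s - δ := by rw [← dist_eq_norm]; exact hy1
  have hyb : s ≤ ‖y - b‖ := by
    rw [← dist_eq_norm]; have := infDist_le_dist_of_mem (x := y) hb; linarith
  -- y - p = (s/δ) (x - p)
  have e1 : ‖y - p‖ ^ 2 = ‖y - x‖ ^ 2 + 2 * ⟪y - x, x - p⟫ + ‖x - p‖ ^ 2 := by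
    rw [← norm_add_sq_real]; congr 2; abel
  have e2 : ‖δ • (y - x) - (s - δ) • (x - p)‖ ^ 2 = 
      δ ^ 2 * ‖y - x‖ ^ 2 - 2 * δ * (s - δ) * ⟪y - x, x - p⟫ + (s - δ) ^ 2 * ‖x - p‖ ^ 2 := by
    rw [norm_sub_sq_real, norm_smul, norm_smul, inner_smul_left, inner_smul_right, mul_pow, mul_pow]
    simp; ring
  have e3 : ‖δ • (y - x) - (s - δ) • (x - p)‖ ^ 2 ≤ 0 := by
    rw [e2, hn]
    rw [hn] at e1
    have a1 : s ^ 2 ≤ ‖y - p‖ ^ 2 := by have : 0 ≤ s := by linarith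
                                        gcongr
    have a2 : ‖y - x‖ ^ 2 ≤ (s - δ) ^ 2 := by gcongr
    have a3 : δ * (s - δ) * (s ^ 2) ≤ δ * (s - δ) * ‖y - p‖ ^ 2 :=
      mul_le_mul_of_nonneg_left a1 (mul_nonneg h0.le (by linarith))
    have a4 : δ * s * ‖y - x‖ ^ 2 ≤ δ * s * (s - δ) ^ 2 :=
      mul_le_mul_of_nonneg_left a2 (mul_nonneg h0.le (by linarith))
    nlinarith
  have e4 : δ • (y - x) = (s - δ) • (x - p) := by
    have : ‖δ • (y - x) - (s - δ) • (x - p)‖ = 0 := by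
      have := norm_nonneg (δ • (y - x) - (s - δ) • (x - p)); nlinarith
    exact sub_eq_zero.1 (norm_eq_zero.1 this)
  have e5 : δ • (y - b) = s • (x - p) - δ • (b - p) := by
    have : δ • (y - b) = δ • (y - x) + δ • (x - p) - δ • (b - p) := by
      rw [← smul_add, ← smul_sub]; congr 1; abel
    rw [this, e4, ← add_smul]; congr 2; ring
  have e6 : (δ * s) ^ 2 ≤ ‖δ • (y - b)‖ ^ 2 := by
    rw [norm_smul, Real.norm_of_nonneg h0.le]
    have : 0 ≤ s := by linarith
    gcongr
  rw [e5, norm_sub_sq_real, norm_smul, norm_smul, inner_smul_left, inner_smul_right, hn,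
    Real.norm_of_nonneg h0.le, Real.norm_of_nonneg (by linarith : 0 ≤ s)] at e6
  simp only [conj_trivial] at e6
  have e7 : δ * (2 * s * ⟪x - p, b - p⟫) ≤ δ * (δ * ‖b - p‖ ^ 2) := by nlinarith
  rw [hn]
  exact le_of_mul_le_mul_left e7 h0

theorem aux_mid [ProperSpace E] {A : Set E} (hA : A.Nonempty) {R : ℝ} (hR : 0 < R)
    (hU : ∀ x : E, infDist x A < R → UnpPt A x) {a b : E} (ha : a ∈ A) (hb : b ∈ A)
    {s : ℝ} (hs : s < R) (hab : ‖a - b‖ < s) :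
    ∃ p ∈ A, ‖(2⁻¹ : ℝ) • (a + b) - p‖ ≤ ‖a - b‖ / 2 ∧
      2 * s * ‖(2⁻¹ : ℝ) • (a + b) - p‖ ≤ ‖a - b‖ ^ 2 := by
  set m := (2⁻¹ : ℝ) • (a + b) with hm
  have ha1 : a - m = (2⁻¹ : ℝ) • (a - b) := by rw [hm]; module
  have hb1 : b - m = -((2⁻¹ : ℝ) • (a - b)) := by rw [hm]; module
  have ha2 : ‖a - m‖ = ‖a - b‖ / 2 := by rw [ha1, norm_smul]; norm_num; ring
  have hb2 : ‖b - m‖ = ‖a - b‖ / 2 := by rw [hb1, norm_neg, norm_smul]; norm_num; ring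
  have hn := norm_nonneg (a - b)
  have h1 : infDist m A ≤ ‖a - b‖ / 2 := by
    rw [← ha2, ← dist_eq_norm, dist_comm]; exact infDist_le_dist_of_mem ha
  obtain ⟨p, ⟨hp, hd⟩, -⟩ := hU m (by linarith)
  have hmp : ‖m - p‖ ≤ ‖a - b‖ / 2 := by rw [← dist_eq_norm, hd]; exact h1
  refine ⟨p, hp, hmp, ?_⟩
  have n1 := aux_normal_s14 hA hR hU hs (by linarith) hp hd ha
  have n2 := aux_normal_s14 hA hR hU hs (by linarith) hp hd hb
  have n3 : ⟪m - p, a - p⟫ + ⟪m - p, b - p⟫ = 2 * ‖m - p‖ ^ 2 := by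
    rw [← inner_add_right, ← real_inner_self_eq_norm_sq, ← inner_smul_right]
    congr 1; rw [hm]; module
  have a3 : ‖a - p‖ ≤ ‖a - b‖ := by
    have := norm_add_le (a - m) (m - p); rw [sub_add_sub_cancel] at this; linarith
  have b3 : ‖b - p‖ ≤ ‖a - b‖ := by
    have := norm_add_le (b - m) (m - p); rw [sub_add_sub_cancel] at this; linarith
  have a4 : ‖a - p‖ ^ 2 ≤ ‖a - b‖ ^ 2 := by gcongr
  have b4 : ‖b - p‖ ^ 2 ≤ ‖a - b‖ ^ 2 := by gcongr
  rcases (norm_nonneg (m - p)).eq_or_lt with h0 | h0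
  · rw [← h0]; nlinarith
  · refine le_of_mul_le_mul_left ?_ h0
    have a5 := mul_le_mul_of_nonneg_left a4 h0.le
    have b5 := mul_le_mul_of_nonneg_left b4 h0.le
    nlinarith

section C11
variable {V F : Type*} [NormedAddCommGroup V] [NormedSpace ℝ V]
  [NormedAddCommGroup F] [NormedSpace ℝ F] [CompleteSpace F]

/-- Local construction of the derivative at one point. -/
theorem aux_deriv {f : V → F} {c : V} {r C K : ℝ} (hr : 0 < r) (hC : 0 ≤ C) (hK : 0 ≤ K)
    (hlip : ∀ x ∈ ball c r, ∀ y ∈ ball c r, ‖f x - f y‖ ≤ K * ‖x - y‖)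
    (hsec : ∀ x ∈ ball c r, ∀ y ∈ ball c r,
      ‖f x + f y - (2 : ℝ) • f ((2⁻¹ : ℝ) • (x + y))‖ ≤ C * ‖x - y‖ ^ 2)
    {x : V} (hx : x ∈ ball c (r / 2)) :
    ∃ L : V →L[ℝ] F, ∀ h : V, ‖h‖ < r / 2 → ‖f (x + h) - f x - L h‖ ≤ 2 * C * ‖h‖ ^ 2 := by
  have hx0 : dist x c < r / 2 := hx
  have hxr : x ∈ ball c r := ball_subset_ball (by linarith) hx
  have hmem : ∀ h : V, ‖h‖ < r / 2 → x + h ∈ ball c r := by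
    intro h hh
    rw [mem_ball]
    have := dist_triangle (x + h) x c
    rw [dist_eq_norm (x + h) x, add_sub_cancel_left] at this
    linarith
  let e : ℕ → ℝ := fun n => (2⁻¹ : ℝ) ^ n
  have he0 : ∀ n, 0 < e n := fun n => by positivity
  have he1 : ∀ n, e n ≤ 1 := fun n => pow_le_one₀ (by norm_num) (by norm_num)
  have het : Tendsto e atTop (𝓝 0) := tendsto_pow_atTop_nhds_zero_of_lt_one (by norm_num) (by norm_num)
  let D : V → ℕ → F := fun h n => (e n)⁻¹ • (f (x + e n • h) - f x)
  have hens : ∀ n (h : V), ‖e n • h‖ = e n * ‖h‖ := fun n h => by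
    rw [norm_smul, Real.norm_of_nonneg (he0 n).le]
  -- consecutive differences for small h
  have hD1 : ∀ h : V, ‖h‖ < r / 2 → ∀ n, dist (D h n) (D h (n + 1)) ≤ 2 * C * ‖h‖ ^ 2 / 2 / 2 ^ n := by
    intro h hh n
    have hs : ‖e n • h‖ < r / 2 := by
      rw [hens]; exact (mul_le_of_le_one_left (norm_nonneg h) (he1 n)).trans_lt hh
    have h1 := hsec (x + e n • h) (hmem _ hs) x hxr
    have h2 : (2⁻¹ : ℝ) • (x + e n • h + x) = x + e (n + 1) • h := by
      simp only [e, pow_succ]; module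
    rw [h2, add_sub_cancel_left, hens] at h1
    have h3 : D h n - D h (n + 1) =
        (e n)⁻¹ • (f (x + e n • h) + f x - (2 : ℝ) • f (x + e (n + 1) • h)) := by
      have : (e (n + 1))⁻¹ = (e n)⁻¹ * 2 := by simp only [e, pow_succ]; rw [mul_inv, inv_inv]
      simp only [D, this]; module
    rw [dist_eq_norm, h3, norm_smul, norm_inv, Real.norm_of_nonneg (he0 n).le]
    calc (e n)⁻¹ * _ ≤ (e n)⁻¹ * (C * (e n * ‖h‖) ^ 2) :=
          mul_le_mul_of_nonneg_left h1 (inv_nonneg.2 (he0 n).le)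
      _ = C * ‖h‖ ^ 2 * e n := by have := (he0 n).ne'; field_simp
      _ = _ := by simp only [e, inv_pow]; field_simp
  have hex0 : ∀ h : V, ‖h‖ < r / 2 → ∃ l, Tendsto (D h) atTop (𝓝 l) := fun h hh =>
    cauchySeq_tendsto_of_complete (cauchySeq_of_le_geometric_two (hD1 h hh))
  have hsmall : ∀ h : V, ∃ N : ℕ, ‖e N • h‖ < r / 2 := by
    intro h
    have : Tendsto (fun n => e n * ‖h‖) atTop (𝓝 (0 * ‖h‖)) := het.mul_const _
    rw [zero_mul] at this
    obtain ⟨N, hN⟩ := (this.eventually (gt_mem_nhds (by linarith : (0 : ℝ) < r / 2))).exists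
    exact ⟨N, by rw [hens]; exact hN⟩
  have hex : ∀ h : V, ∃ l, Tendsto (D h) atTop (𝓝 l) := by
    intro h
    obtain ⟨N, hN⟩ := hsmall h
    obtain ⟨l, hl⟩ := hex0 _ hN
    refine ⟨(e N)⁻¹ • l, ?_⟩
    rw [← tendsto_add_atTop_iff_nat N]
    refine (hl.const_smul (e N)⁻¹).congr fun n => ?_
    simp only [D, smul_smul]
    have : e (n + N) = e n * e N := pow_add _ _ _
    rw [this, mul_inv, mul_comm (e n)⁻¹]
  choose G hG using hex
  have hGb : ∀ h : V, ‖h‖ < r / 2 → ‖f (x + h) - f x - G h‖ ≤ 2 * C * ‖h‖ ^ 2 := by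
    intro h hh
    have := dist_le_of_le_geometric_two_of_tendsto₀ (hD1 h hh) (hG h)
    rw [dist_eq_norm] at this
    simpa [D, e] using this
  -- eventually small
  have hev : ∀ h : V, ∀ᶠ n in atTop, ‖e n • h‖ < r / 2 := by
    intro h
    have : Tendsto (fun n => e n * ‖h‖) atTop (𝓝 (0 * ‖h‖)) := het.mul_const _
    rw [zero_mul] at this
    filter_upwards [this.eventually (gt_mem_nhds (by linarith : (0 : ℝ) < r / 2))] with n hn
    rw [hens]; exact hn
  have hGK : ∀ h, ‖G h‖ ≤ K * ‖h‖ := by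
    intro h
    refine le_of_tendsto (hG h).norm ?_
    filter_upwards [hev h] with n hn
    have := hlip _ (hmem _ hn) x hxr
    rw [add_sub_cancel_left, hens] at this
    simp only [D]
    rw [norm_smul, norm_inv, Real.norm_of_nonneg (he0 n).le]
    calc (e n)⁻¹ * _ ≤ (e n)⁻¹ * (K * (e n * ‖h‖)) :=
          mul_le_mul_of_nonneg_left this (inv_nonneg.2 (he0 n).le)
      _ = _ := by have := (he0 n).ne'; field_simp
  have hadd : ∀ h k, G (h + k) = G h + G k := by
    intro h k
    have t1 : Tendsto (fun n => D (h + k) n - (D h n + D k n)) atTop (𝓝 (G (h + k) - (G h + G k))) :=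
      (hG _).sub ((hG _).add (hG _))
    have t2 : Tendsto (fun n => D (h + k) n - (D h n + D k n)) atTop (𝓝 0) := by
      have t3 : Tendsto (fun n => e n * (C * (‖h + k‖ ^ 2 + ‖h - k‖ ^ 2))) atTop (𝓝 0) := by
        have := het.mul_const (C * (‖h + k‖ ^ 2 + ‖h - k‖ ^ 2))
        rwa [zero_mul] at this
      refine squeeze_zero_norm' ?_ t3
      filter_upwards [hev h, hev k, hev (h + k)] with n n1 n2 n3
      have s1 := hsec _ (hmem _ n1) _ (hmem _ n2)
      have s2 := hsec _ (hmem _ n3) _ hxr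
      have q1 : (2⁻¹ : ℝ) • (x + e n • h + (x + e n • k)) = x + (2⁻¹ : ℝ) • e n • (h + k) := by module
      have q2 : (2⁻¹ : ℝ) • (x + e n • (h + k) + x) = x + (2⁻¹ : ℝ) • e n • (h + k) := by module
      have q3 : x + e n • h - (x + e n • k) = e n • (h - k) := by module
      rw [q1, q3, hens] at s1
      rw [q2, add_sub_cancel_left, hens] at s2
      have q4 : D (h + k) n - (D h n + D k n) = (e n)⁻¹ •
          ((f (x + e n • (h + k)) + f x - (2 : ℝ) • f (x + (2⁻¹ : ℝ) • e n • (h + k)))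
          - (f (x + e n • h) + f (x + e n • k) - (2 : ℝ) • f (x + (2⁻¹ : ℝ) • e n • (h + k)))) := by
        simp only [D]; module
      rw [q4, norm_smul, norm_inv, Real.norm_of_nonneg (he0 n).le]
      have s3 := (norm_sub_le _ _).trans (add_le_add s2 s1)
      calc (e n)⁻¹ * _ ≤ (e n)⁻¹ * _ := mul_le_mul_of_nonneg_left s3 (inv_nonneg.2 (he0 n).le)
        _ = _ := by have := (he0 n).ne'; field_simp
    exact sub_eq_zero.1 (tendsto_nhds_unique t1 t2)
  let Ga : V →+ F := AddMonoidHom.mk' G hadd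
  have hcont : Continuous Ga := AddMonoidHomClass.continuous_of_bound Ga K hGK
  exact ⟨Ga.toRealLinearMap hcont, hGb⟩

theorem aux_c11 {f : V → F} {c : V} {r C K : ℝ} (hr : 0 < r) (hC : 0 ≤ C) (hK : 0 ≤ K)
    (hlip : ∀ x ∈ ball c r, ∀ y ∈ ball c r, ‖f x - f y‖ ≤ K * ‖x - y‖)
    (hsec : ∀ x ∈ ball c r, ∀ y ∈ ball c r,
      ‖f x + f y - (2 : ℝ) • f ((2⁻¹ : ℝ) • (x + y))‖ ≤ C * ‖x - y‖ ^ 2) :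
    ∃ g : V → (V →L[ℝ] F), (∀ w ∈ ball c (r / 8), HasFDerivAt f (g w) w) ∧
      ∃ M : ℝ≥0, LipschitzOnWith M g (ball c (r / 8)) := by
  have hex : ∀ x : V, ∃ L : V →L[ℝ] F, x ∈ ball c (r / 2) → ∀ h : V, ‖h‖ < r / 2 →
      ‖f (x + h) - f x - L h‖ ≤ 2 * C * ‖h‖ ^ 2 := by
    intro x
    by_cases hx : x ∈ ball c (r / 2)
    · obtain ⟨L, hL⟩ := aux_deriv hr hC hK hlip hsec hx
      exact ⟨L, fun _ => hL⟩
    · exact ⟨0, fun h => absurd h hx⟩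
  choose g hg using hex
  have hsub : ball c (r / 8) ⊆ ball c (r / 2) := ball_subset_ball (by linarith)
  refine ⟨g, fun w hw => ?_, (12 * C).toNNReal, ?_⟩
  · rw [hasFDerivAt_iff_isLittleO_nhds_zero]
    have h1 : (fun h : V => f (w + h) - f w - g w h) =O[𝓝 0] fun h : V => ‖h‖ ^ 2 := by
      refine Asymptotics.IsBigO.of_bound (2 * C) ?_
      filter_upwards [ball_mem_nhds (0 : V) (by linarith : 0 < r / 2)] with h hh
      rw [mem_ball_zero_iff] at hh
      simpa using hg w (hsub hw) h hh
    exact h1.trans_isLittleO (Asymptotics.isLittleO_norm_pow_id one_lt_two)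
  · refine LipschitzOnWith.of_dist_le_mul fun x hx y hy => ?_
    rw [dist_eq_norm, dist_eq_norm, Real.coe_toNNReal _ (by positivity)]
    rcases eq_or_ne x y with rfl | hxy
    · simp
    have hpos : 0 < ‖x - y‖ := norm_pos_iff.2 (sub_ne_zero.2 hxy)
    set ρ := ‖x - y‖ with hρ
    have hρr : ρ < r / 4 := by
      rw [hρ, ← dist_eq_norm]
      have := dist_triangle_right x y c
      rw [mem_ball] at hx hy; linarith
    -- bound on vectors of norm ρ
    have key : ∀ h : V, ‖h‖ = ρ → ‖(g x - g y) h‖ ≤ 12 * C * ρ * ‖h‖ := by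
      intro h hh
      have b1 := hg x (hsub hx) h (by linarith)
      have n2 : ‖x - y + h‖ ≤ 2 * ρ := by
        have := norm_add_le (x - y) h; linarith
      have b2 := hg y (hsub hy) (x - y + h) (by linarith)
      have b3 := hg y (hsub hy) (x - y) (by linarith)
      have n3 : ‖x - y + h‖ ^ 2 ≤ (2 * ρ) ^ 2 := by gcongr
      have q1 : y + (x - y + h) = x + h := by abel
      have q2 : y + (x - y) = x := by abel
      rw [q1, map_add] at b2
      rw [q2] at b3
      have q3 : (g x - g y) h = (f (x + h) - f y - (g y (x - y) + g y h))
          - (f x - f y - g y (x - y)) - (f (x + h) - f x - g x h) := by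
        rw [ContinuousLinearMap.sub_apply]; abel
      rw [q3]
      have s1 := norm_sub_le ((f (x + h) - f y - (g y (x - y) + g y h))
          - (f x - f y - g y (x - y))) (f (x + h) - f x - g x h)
      have s2 := norm_sub_le (f (x + h) - f y - (g y (x - y) + g y h)) (f x - f y - g y (x - y))
      have s3 := mul_le_mul_of_nonneg_left n3 (by positivity : 0 ≤ 2 * C)
      rw [hh] at b1 ⊢
      nlinarith
    refine ContinuousLinearMap.opNorm_le_bound _ (by positivity) fun h => ?_
    rcases eq_or_ne h 0 with rfl | hh
    · simp
    have hhp : 0 < ‖h‖ := norm_pos_iff.2 hh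
    have k1 := key ((ρ / ‖h‖) • h) (by
      rw [norm_smul, Real.norm_of_nonneg (by positivity)]; field_simp)
    rw [map_smul, norm_smul, norm_smul, Real.norm_of_nonneg (by positivity : 0 ≤ ρ / ‖h‖)] at k1
    refine le_of_mul_le_mul_left (k1.trans_eq ?_) (by positivity : 0 < ρ / ‖h‖)
    ring
end C11

theorem aux_split (W : Submodule ℝ E) (u : W) (v : Wᗮ) :
    ‖u‖ ≤ ‖(u : E) + (v : E)‖ ∧ ‖v‖ ≤ ‖(u : E) + (v : E)‖ := by
  have h : ‖(u : E) + (v : E)‖ ^ 2 = ‖u‖ ^ 2 + ‖v‖ ^ 2 := by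
    rw [norm_add_sq_real, Submodule.inner_right_of_mem_orthogonal u.2 v.2]
    simp
  constructor
  · refine abs_le_of_sq_le_sq' ?_ (norm_nonneg _) |>.2
    rw [h]; nlinarith [sq_nonneg ‖v‖]
  · refine abs_le_of_sq_le_sq' ?_ (norm_nonneg _) |>.2
    rw [h]; nlinarith [sq_nonneg ‖u‖]

/-- A Lipschitz manifold of dimension k with positive reach is a C^{1,1} manifold. -/
theorem stmt14 {d k : ℕ} (hk : 0 < k) (hkd : k < d)
    (A : Set (EuclideanSpace ℝ (Fin d))) (hA : A.Nonempty)
    (hreach : 0 < setReach A)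
    (hlip : ∀ a ∈ A, ∃ (W : Submodule ℝ (EuclideanSpace ℝ (Fin d))) (K : ℝ≥0)
      (c : W) (r : ℝ)
      (φ : W → (Wᗮ : Submodule ℝ (EuclideanSpace ℝ (Fin d)))),
      Module.finrank ℝ W = k ∧ 0 < r ∧ LipschitzOnWith K φ (ball c r) ∧
      ∃ O : Set (EuclideanSpace ℝ (Fin d)), IsOpen O ∧ a ∈ O ∧
        {x : EuclideanSpace ℝ (Fin d) | ∃ w ∈ ball c r,
          x = (w : EuclideanSpace ℝ (Fin d)) + (φ w : EuclideanSpace ℝ (Fin d))}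
          = A ∩ O) :
    ∀ a ∈ A, ∃ (W : Submodule ℝ (EuclideanSpace ℝ (Fin d))) (c : W) (r : ℝ)
      (φ : W → (Wᗮ : Submodule ℝ (EuclideanSpace ℝ (Fin d))))
      (g : W → (W →L[ℝ] (Wᗮ : Submodule ℝ (EuclideanSpace ℝ (Fin d))))),
      Module.finrank ℝ W = k ∧ 0 < r ∧
      (∀ w ∈ ball c r, HasFDerivAt φ (g w) w) ∧
      (∃ C : ℝ≥0, LipschitzOnWith C g (ball c r)) ∧
      ∃ O : Set (EuclideanSpace ℝ (Fin d)), IsOpen O ∧ a ∈ O ∧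
        {x : EuclideanSpace ℝ (Fin d) | ∃ w ∈ ball c r,
          x = (w : EuclideanSpace ℝ (Fin d)) + (φ w : EuclideanSpace ℝ (Fin d))}
          = A ∩ O := by
  obtain ⟨R, hR, hU⟩ := aux_reach_s14 hA hreach
  intro a ha
  obtain ⟨W, K, c, r, φ, hdim, hr, hφ, O, hO, haO, hgr⟩ := hlip a ha
  obtain ⟨w0, hw0, haw⟩ : a ∈ {x : EuclideanSpace ℝ (Fin d) | ∃ w ∈ ball c r,
          x = (w : EuclideanSpace ℝ (Fin d)) + (φ w : EuclideanSpace ℝ (Fin d))} := by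
    rw [hgr]; exact ⟨ha, haO⟩
  let G : W → EuclideanSpace ℝ (Fin d) := fun w => (w : EuclideanSpace ℝ (Fin d)) + (φ w : EuclideanSpace ℝ (Fin d))
  have hGA : ∀ w ∈ ball c r, G w ∈ A ∩ O := fun w hw => by
    rw [← hgr]; exact ⟨w, hw, rfl⟩
  have haG : a = G w0 := haw
  obtain ⟨ρ, hρ, hρO⟩ := Metric.isOpen_iff.1 hO a haO
  have hφ' : ∀ u ∈ ball c r, ∀ v ∈ ball c r, ‖φ u - φ v‖ ≤ K * ‖u - v‖ := by
    intro u hu v hv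
    rw [← dist_eq_norm, ← dist_eq_norm]; exact hφ.dist_le_mul u hu v hv
  set L : ℝ := 1 + K with hL
  have hK0 : (0 : ℝ) ≤ K := K.2
  have hLp : 0 < L := by positivity
  have hGL : ∀ u ∈ ball c r, ∀ v ∈ ball c r, ‖G u - G v‖ ≤ L * ‖u - v‖ := by
    intro u hu v hv
    have e : G u - G v = ((u - v : W) : EuclideanSpace ℝ (Fin d)) + ((φ u - φ v : Wᗮ) : EuclideanSpace ℝ (Fin d)) := by
      simp only [G, Submodule.coe_sub]; abel
    have h1 := norm_add_le ((u - v : W) : EuclideanSpace ℝ (Fin d)) ((φ u - φ v : Wᗮ) : EuclideanSpace ℝ (Fin d))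
    rw [← e, ← Submodule.coe_norm, ← Submodule.coe_norm] at h1
    have h2 := hφ' u hu v hv
    rw [hL]; linarith
  set s := R / 2 with hs
  have hsp : 0 < s := by positivity
  have hw0' : dist w0 c < r := hw0
  set r' := min (r - dist w0 c) (min (s / (2 * L)) (ρ / (2 * L))) with hr'
  have hr'p : 0 < r' := lt_min (by linarith) (lt_min (by positivity) (by positivity))
  have hr1 : r' ≤ r - dist w0 c := min_le_left _ _
  have hr2 : 2 * L * r' ≤ s := by
    have : r' ≤ s / (2 * L) := (min_le_right _ _).trans (min_le_left _ _)
    rw [le_div_iff₀ (by positivity)] at this; linarith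
  have hr3 : 2 * L * r' ≤ ρ := by
    have : r' ≤ ρ / (2 * L) := (min_le_right _ _).trans (min_le_right _ _)
    rw [le_div_iff₀ (by positivity)] at this; linarith
  have hbs : ball w0 r' ⊆ ball c r := ball_subset_ball' (by linarith)
  have hsec : ∀ u ∈ ball w0 r', ∀ v ∈ ball w0 r',
      ‖φ u + φ v - (2 : ℝ) • φ ((2⁻¹ : ℝ) • (u + v))‖ ≤ (L ^ 3 / s) * ‖u - v‖ ^ 2 := by
    intro u hu v hv
    have hu1 := hbs hu
    have hv1 := hbs hv
    have hu2 : ‖u - w0‖ < r' := by rw [← dist_eq_norm]; exact hu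
    have hv2 : ‖v - w0‖ < r' := by rw [← dist_eq_norm]; exact hv
    have huv : ‖u - v‖ < 2 * r' := by
      have := norm_sub_le (u - w0) (v - w0)
      rw [sub_sub_sub_cancel_right] at this; linarith
    have hGuv := hGL u hu1 v hv1
    have hmid : (2⁻¹ : ℝ) • (u + v) ∈ ball c r := by
      have := (convex_ball c r) hu1 hv1 (by norm_num : (0 : ℝ) ≤ 2⁻¹) (by norm_num : (0 : ℝ) ≤ 2⁻¹)
        (by norm_num)
      rwa [← smul_add] at this
    have hGs : ‖G u - G v‖ < 2 * L * r' := by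
      refine hGuv.trans_lt ?_
      have := mul_lt_mul_of_pos_left huv hLp
      linarith
    obtain ⟨p, hp, hp1, hp2⟩ := aux_mid hA hR hU (hGA u hu1).1 (hGA v hv1).1
      (s := s) (by linarith) (by linarith)
    have hpa : p ∈ ball a ρ := by
      rw [mem_ball, dist_eq_norm]
      have e : p - a = -((2⁻¹ : ℝ) • (G u + G v) - p) + ((2⁻¹ : ℝ) • (G u - G w0) + (2⁻¹ : ℝ) • (G v - G w0)) := by
        rw [haG]; module
      have b1 := hGL u hu1 w0 hw0
      have b2 := hGL v hv1 w0 hw0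
      have b3 := mul_lt_mul_of_pos_left hu2 hLp
      have b4 := mul_lt_mul_of_pos_left hv2 hLp
      have n1 := norm_add_le (-((2⁻¹ : ℝ) • (G u + G v) - p)) ((2⁻¹ : ℝ) • (G u - G w0) + (2⁻¹ : ℝ) • (G v - G w0))
      have n2 := norm_add_le ((2⁻¹ : ℝ) • (G u - G w0)) ((2⁻¹ : ℝ) • (G v - G w0))
      rw [norm_smul, norm_smul, Real.norm_of_nonneg (by norm_num : (0 : ℝ) ≤ 2⁻¹)] at n2
      rw [← e, norm_neg] at n1
      linarith
    obtain ⟨w, hw, hpw⟩ : p ∈ {x : EuclideanSpace ℝ (Fin d) | ∃ w ∈ ball c r,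
          x = (w : EuclideanSpace ℝ (Fin d)) + (φ w : EuclideanSpace ℝ (Fin d))} := by
      rw [hgr]; exact ⟨hp, hρO hpa⟩
    set D := ‖(2⁻¹ : ℝ) • (G u + G v) - p‖ with hD
    have e : (2⁻¹ : ℝ) • (G u + G v) - p = (((2⁻¹ : ℝ) • (u + v) - w : W) : EuclideanSpace ℝ (Fin d))
        + (((2⁻¹ : ℝ) • (φ u + φ v) - φ w : Wᗮ) : EuclideanSpace ℝ (Fin d)) := by
      rw [hpw]; simp only [G, Submodule.coe_sub, Submodule.coe_add, Submodule.coe_smul]; module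
    obtain ⟨c1, c2⟩ := aux_split W ((2⁻¹ : ℝ) • (u + v) - w) ((2⁻¹ : ℝ) • (φ u + φ v) - φ w)
    rw [← e, ← hD] at c1 c2
    have c3 := hφ' _ hmid w hw
    have c4 := mul_le_mul_of_nonneg_left c1 hK0
    have e2 : φ u + φ v - (2 : ℝ) • φ ((2⁻¹ : ℝ) • (u + v)) =
        (2 : ℝ) • (((2⁻¹ : ℝ) • (φ u + φ v) - φ w) - (φ ((2⁻¹ : ℝ) • (u + v)) - φ w)) := by module
    rw [e2, norm_smul, Real.norm_of_nonneg (by norm_num : (0 : ℝ) ≤ 2)]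
    have c5 := norm_sub_le ((2⁻¹ : ℝ) • (φ u + φ v) - φ w) (φ ((2⁻¹ : ℝ) • (u + v)) - φ w)
    have c6 : ‖G u - G v‖ ^ 2 ≤ (L * ‖u - v‖) ^ 2 := by gcongr
    rw [div_mul_eq_mul_div, le_div_iff₀ hsp]
    have c7 : L * (2 * s * D) ≤ L * (L * ‖u - v‖) ^ 2 :=
      mul_le_mul_of_nonneg_left (hp2.trans c6) hLp.le
    have c8 : ‖(2⁻¹ : ℝ) • (φ u + φ v) - φ w - (φ ((2⁻¹ : ℝ) • (u + v)) - φ w)‖ ≤ L * D := by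
      rw [hL]; linarith
    have c9 := mul_le_mul_of_nonneg_right c8 hsp.le
    linarith
  obtain ⟨g, hg, hgM⟩ := aux_c11 hr'p (by positivity : 0 ≤ L ^ 3 / s) hK0
    (fun u hu v hv => hφ' u (hbs hu) v (hbs hv)) hsec
  have hbs8 : ball w0 (r' / 8) ⊆ ball c r := (ball_subset_ball (by linarith)).trans hbs
  have hproj : ∀ w : W, W.orthogonalProjectionOnto ((w : EuclideanSpace ℝ (Fin d)) + (φ w : EuclideanSpace ℝ (Fin d))) = w := by
    intro w
    rw [map_add, Submodule.orthogonalProjectionOnto_mem_subspace_eq_self,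
      Submodule.orthogonalProjectionOnto_eq_zero_iff.2 (φ w).2, add_zero]
  refine ⟨W, w0, r' / 8, φ, g, hdim, by positivity, hg, hgM,
    O ∩ W.orthogonalProjectionOnto ⁻¹' ball w0 (r' / 8),
    hO.inter (isOpen_ball.preimage W.orthogonalProjectionOnto.continuous), ⟨haO, ?_⟩, ?_⟩
  · rw [mem_preimage, haw, hproj]; exact mem_ball_self (by positivity)
  · ext x
    constructor
    · rintro ⟨w, hw, rfl⟩
      have := hGA w (hbs8 hw)
      refine ⟨this.1, this.2, ?_⟩
      rw [mem_preimage, hproj]; exact hw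
    · rintro ⟨hxA, hxO, hxp⟩
      obtain ⟨w, hw, rfl⟩ : x ∈ {x : EuclideanSpace ℝ (Fin d) | ∃ w ∈ ball c r,
          x = (w : EuclideanSpace ℝ (Fin d)) + (φ w : EuclideanSpace ℝ (Fin d))} := by
        rw [hgr]; exact ⟨hxA, hxO⟩
      rw [mem_preimage, hproj] at hxp
      exact ⟨w, hxp, rfl⟩
end
end
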